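/- Every normal circulant scheme is sesquiseparable. -/

import Mathlib

open Set

universe u

/-- A coherent configuration on a finite set `Ω`: a partition `S` of `Ω × Ω`
satisfying (C1) the diagonal is a union of classes, (C2) closure under converse,
(C3) well-defined intersection numbers. -/
structure CohCfg (Ω : Type u) : Type u where
  S : Set (Set (Ω × Ω))
  finite : Finite Ω
  cover : ∀ p : Ω × Ω, ∃ s ∈ S, p ∈ s
  disj : ∀ s ∈ S, ∀ t ∈ S, s ≠ t → s ∩ t = ∅
  nonemp : ∀ s ∈ S, s.Nonempty
  diag : ∀ s ∈ S, (∃ p ∈ s, p.1 = p.2) → ∀ p ∈ s, p.1 = p.2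
  conv : ∀ s ∈ S, {p : Ω × Ω | (p.2, p.1) ∈ s} ∈ S
  inum : ∀ r ∈ S, ∀ s ∈ S, ∀ t ∈ S, ∀ p ∈ t, ∀ q ∈ t,
    {γ : Ω | (p.1, γ) ∈ r ∧ (γ, p.2) ∈ s}.ncard =
    {γ : Ω | (q.1, γ) ∈ r ∧ (γ, q.2) ∈ s}.ncard

namespace CohCfg

variable {Ω Ω' : Type u}

/-- The intersection number `c^t_{rs}` computed at the pair `p`. -/
noncomputable def cnum (r s : Set (Ω × Ω)) (p : Ω × Ω) : ℕ :=
  {γ : Ω | (p.1, γ) ∈ r ∧ (γ, p.2) ∈ s}.ncard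

/-- `X` is a scheme (homogeneous) if the full diagonal is a basis relation. -/
def IsScheme (X : CohCfg Ω) : Prop := {p : Ω × Ω | p.1 = p.2} ∈ X.S

/-- Commutativity: `c^t_{rs} = c^t_{sr}`. -/
def IsCommutative (X : CohCfg Ω) : Prop :=
  ∀ r ∈ X.S, ∀ s ∈ X.S, ∀ p : Ω × Ω, cnum r s p = cnum s r p

/-- `s` is a relation of `X`, i.e. a union of basis relations. -/
def IsRelationOf (X : CohCfg Ω) (s : Set (Ω × Ω)) : Prop :=
  ∀ t ∈ X.S, (t ∩ s).Nonempty → t ⊆ s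

/-- `X ≤ Y`: every (basis) relation of `X` is a relation of `Y`. -/
def le (X Y : CohCfg Ω) : Prop := ∀ s ∈ X.S, IsRelationOf Y s

/-- The diagonal relation `1_Δ` of a subset `Δ`. -/
def diagRel (Δ : Set Ω) : Set (Ω × Ω) := {p | p.1 = p.2 ∧ p.1 ∈ Δ}

/-- `Δ` is a fiber of `X`. -/
def IsFiber (X : CohCfg Ω) (Δ : Set Ω) : Prop := diagRel Δ ∈ X.S

/-- `αs = {β | (α,β) ∈ s}`. -/
def pointSet (s : Set (Ω × Ω)) (α : Ω) : Set Ω := {β | (α, β) ∈ s}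

/-- `X` is partly regular: some point `α` has `|αs| ≤ 1` for all basis relations. -/
def PartlyRegular (X : CohCfg Ω) : Prop :=
  ∃ α : Ω, ∀ s ∈ X.S, (pointSet s α).ncard ≤ 1

/-- The image `s^f` of a relation under a map of points. -/
def relImage (f : Ω → Ω') (s : Set (Ω × Ω)) : Set (Ω' × Ω') :=
  (fun p : Ω × Ω => (f p.1, f p.2)) '' s

/-- `φ` is an algebraic isomorphism from `X` to `X'`. -/
structure IsAlgIso (X : CohCfg Ω) (X' : CohCfg Ω')
    (φ : Set (Ω × Ω) → Set (Ω' × Ω')) : Prop where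
  bijOn : Set.BijOn φ X.S X'.S
  cnum_eq : ∀ r ∈ X.S, ∀ s ∈ X.S, ∀ t ∈ X.S, ∀ p ∈ t, ∀ q ∈ φ t,
    cnum r s p = cnum (φ r) (φ s) q

/-- The natural extension of an algebraic isomorphism to unions of basis relations. -/
def algImage (X : CohCfg Ω) (φ : Set (Ω × Ω) → Set (Ω' × Ω')) (s : Set (Ω × Ω)) :
    Set (Ω' × Ω') := ⋃₀ (φ '' {t | t ∈ X.S ∧ t ⊆ s})

/-- The image `Δ^φ` of a fiber under an algebraic isomorphism. -/
def fiberImage (X : CohCfg Ω) (φ : Set (Ω × Ω) → Set (Ω' × Ω')) (Δ : Set Ω) : Set Ω' :=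
  {α' | (α', α') ∈ φ (diagRel Δ)}

/-- `Y` is the point extension `X_α`: the smallest coherent configuration `≥ X`
having `1_α` as a basis relation. -/
def IsPointExt (X : CohCfg Ω) (α : Ω) (Y : CohCfg Ω) : Prop :=
  le X Y ∧ ({(α, α)} : Set (Ω × Ω)) ∈ Y.S ∧
    ∀ Z : CohCfg Ω, le X Z → ({(α, α)} : Set (Ω × Ω)) ∈ Z.S → le Y Z

/-- `φ` has an `(α,α')`-extension: an algebraic isomorphism `X_α → X'_{α'}`
extending `φ` and sending `1_α` to `1_{α'}`. -/
def HasExtension (X : CohCfg Ω) (X' : CohCfg Ω') (φ : Set (Ω × Ω) → Set (Ω' × Ω'))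
    (α : Ω) (α' : Ω') : Prop :=
  ∃ (Y : CohCfg Ω) (Y' : CohCfg Ω') (ψ : Set (Ω × Ω) → Set (Ω' × Ω')),
    IsPointExt X α Y ∧ IsPointExt X' α' Y' ∧ IsAlgIso Y Y' ψ ∧
    (∀ s ∈ X.S, algImage Y ψ s = φ s) ∧ ψ {(α, α)} = {(α', α')}

/-- A sesquiclosed algebraic isomorphism: has an `(α,α')`-extension for all
`α ∈ Δ ∈ F(X)` and `α' ∈ Δ^φ`. -/
def SesquiclosedIso (X : CohCfg Ω) (X' : CohCfg Ω')
    (φ : Set (Ω × Ω) → Set (Ω' × Ω')) : Prop :=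
  IsAlgIso X X' φ ∧
  ∀ Δ : Set Ω, IsFiber X Δ → ∀ α ∈ Δ, ∀ α' ∈ fiberImage X φ Δ, HasExtension X X' φ α α'

/-- `φ` is induced by the combinatorial isomorphism `f`. -/
def InducedBy (X : CohCfg Ω) (X' : CohCfg Ω') (φ : Set (Ω × Ω) → Set (Ω' × Ω'))
    (f : Ω → Ω') : Prop :=
  Function.Bijective f ∧ ∀ s ∈ X.S, φ s = relImage f s

/-- `X` is separable: every algebraic isomorphism from `X` is induced by an isomorphism. -/
def Separable (X : CohCfg Ω) : Prop :=
  ∀ (Ω'' : Type u) (X' : CohCfg Ω'') (φ : Set (Ω × Ω) → Set (Ω'' × Ω'')),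
    IsAlgIso X X' φ → ∃ f : Ω → Ω'', InducedBy X X' φ f

/-- `X` is sesquiseparable: every sesquiclosed algebraic isomorphism from `X`
is induced by an isomorphism. -/
def Sesquiseparable (X : CohCfg Ω) : Prop :=
  ∀ (Ω'' : Type u) (X' : CohCfg Ω'') (φ : Set (Ω × Ω) → Set (Ω'' × Ω'')),
    SesquiclosedIso X X' φ → ∃ f : Ω → Ω'', InducedBy X X' φ f

/-- A sesquiclosed coherent configuration: (S1) the fibers of every one-point
extension `X_α` are the nonempty sets `αs`, and (S2) the identity algebraic
automorphism is sesquiclosed. -/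
def SesquiclosedCfg (X : CohCfg Ω) : Prop :=
  (∀ α : Ω, ∀ Y : CohCfg Ω, IsPointExt X α Y →
     ∀ Δ : Set Ω, (IsFiber Y Δ ↔ ∃ s ∈ X.S, Δ = pointSet s α ∧ Δ.Nonempty)) ∧
  SesquiclosedIso X X id

/-- A parabolic of `X`: a relation that is an equivalence relation on `Ω`. -/
def IsParabolic (X : CohCfg Ω) (e : Set (Ω × Ω)) : Prop :=
  IsRelationOf X e ∧ (∀ a : Ω, (a, a) ∈ e) ∧ (∀ p ∈ e, (p.2, p.1) ∈ e) ∧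
    ∀ a b c : Ω, (a, b) ∈ e → (b, c) ∈ e → (a, c) ∈ e

/-- The class of `a` modulo the equivalence relation `e`. -/
def eClass (e : Set (Ω × Ω)) (a : Ω) : Set Ω := {b | (a, b) ∈ e}

/-- `Δ/e` is a section of `X`: `e` is a parabolic and `Δ` is a class of a
parabolic containing `e`. -/
def IsSection (X : CohCfg Ω) (Δ : Set Ω) (e : Set (Ω × Ω)) : Prop :=
  IsParabolic X e ∧ ∃ d : Set (Ω × Ω), IsParabolic X d ∧ e ⊆ d ∧ ∃ a : Ω, Δ = eClass d a

/-- The point set of the section `Δ/e`: the `e`-classes of points of `Δ`. -/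
abbrev Sec (Δ : Set Ω) (e : Set (Ω × Ω)) : Type u :=
  {Γ : Set Ω // ∃ a ∈ Δ, Γ = eClass e a}

/-- The relation `s_𝔖` on the section `𝔖 = Δ/e`. -/
def secRel (Δ : Set Ω) (e : Set (Ω × Ω)) (s : Set (Ω × Ω)) :
    Set (Sec Δ e × Sec Δ e) :=
  {p | ∃ a ∈ p.1.1, ∃ b ∈ p.2.1, (a, b) ∈ s}

/-- `Y` is the coherent configuration `X_𝔖` on the section `𝔖 = Δ/e`. -/
def IsSectionCfg (X : CohCfg Ω) (Δ : Set Ω) (e : Set (Ω × Ω))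
    (Y : CohCfg (Sec Δ e)) : Prop :=
  Y.S = {t | ∃ s ∈ X.S, t = secRel Δ e s ∧ t.Nonempty}

/-- The restriction `s_Δ` of a relation to a subset `Δ`. -/
def restRel (Δ : Set Ω) (s : Set (Ω × Ω)) : Set (↥Δ × ↥Δ) := {p | (p.1.1, p.2.1) ∈ s}

/-- `Y` is the restriction `X_Δ` of `X` to `Δ`. -/
def IsRestrictionCfg (X : CohCfg Ω) (Δ : Set Ω) (Y : CohCfg ↥Δ) : Prop :=
  Y.S = {t | ∃ s ∈ X.S, t = restRel Δ s ∧ t.Nonempty}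

/-- `Iso(X, X', φ)`: isomorphisms inducing the algebraic isomorphism `φ`. -/
def IsoSet (X : CohCfg Ω) (X' : CohCfg Ω') (φ : Set (Ω × Ω) → Set (Ω' × Ω')) :
    Set (Ω → Ω') :=
  {f | Function.Bijective f ∧ ∀ s ∈ X.S, relImage f s = φ s}

/-- `X` is schurian: its basis relations are the orbits of `Aut(X)` on `Ω × Ω`. -/
def Schurian (X : CohCfg Ω) : Prop :=
  ∀ s ∈ X.S, ∀ p ∈ s, ∀ q ∈ s, ∃ f : Ω → Ω,
    (Function.Bijective f ∧ ∀ t ∈ X.S, relImage f t = t) ∧ (f p.1, f p.2) = q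

/-- `e ⊆ rad(s)`: `s` is a union of products of pairs of `e`-classes it meets. -/
def RadGE (e s : Set (Ω × Ω)) : Prop :=
  ∀ p ∈ s, ∀ a b : Ω, (p.1, a) ∈ e → (p.2, b) ∈ e → (a, b) ∈ s

/-- The `e₁/e₀`-condition: every basis relation disjoint from `e₁` has `e₀` in
its radical. -/
def WedgeCond (X : CohCfg Ω) (e0 e1 : Set (Ω × Ω)) : Prop :=
  ∀ s ∈ X.S, s ∩ e1 = ∅ → RadGE e0 s

/-- A circulant coherent configuration on a group `G`: right translations are
automorphisms. -/
def IsCirculant {G : Type u} [Group G] (X : CohCfg G) : Prop :=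
  ∀ g : G, ∀ s ∈ X.S, relImage (fun x => x * g) s = s

/-- The equivalence relation `e(H)` whose classes are the cosets of `H`. -/
def eRelSet {G : Type u} [Group G] (H : Subgroup G) : Set (G × G) :=
  {p | p.1⁻¹ * p.2 ∈ H}

/-- `H` is an `X`-group. -/
def IsXGroup {G : Type u} [Group G] (X : CohCfg G) (H : Subgroup G) : Prop :=
  IsParabolic X (eRelSet H)

/-- A normal circulant scheme: every automorphism fixing the identity is a
group automorphism. -/
def IsNormalCirc {G : Type u} [Group G] (X : CohCfg G) : Prop :=
  ∀ f : G → G, Function.Bijective f → (∀ s ∈ X.S, relImage f s = s) → f 1 = 1 →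
    ∀ a b : G, f (a * b) = f a * f b

/-- Normality of a circulant scheme presented on a section `Δ/e` of a group `G`
(the points are cosets): every automorphism fixing the class of `1` respects the
coset multiplication. -/
def IsNormalSec {G : Type u} [Group G] (Δ : Set G) (e : Set (G × G))
    (Y : CohCfg (Sec Δ e)) : Prop :=
  ∀ F : Sec Δ e → Sec Δ e, Function.Bijective F → (∀ t ∈ Y.S, relImage F t = t) →
    (∀ Γ : Sec Δ e, (1 : G) ∈ Γ.1 → F Γ = Γ) →
    ∀ Γ Γ' Γ'' : Sec Δ e, Γ''.1 = Set.image2 (· * ·) Γ.1 Γ'.1 →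
      (F Γ'').1 = Set.image2 (· * ·) (F Γ).1 (F Γ').1

/-- Normality of a circulant scheme presented on (the subtype of) a subgroup `U ⊆ G`. -/
def IsNormalRest {G : Type u} [Group G] (U : Set G) (Y : CohCfg ↥U) : Prop :=
  ∀ F : ↥U → ↥U, Function.Bijective F → (∀ t ∈ Y.S, relImage F t = t) →
    (∀ x : ↥U, x.1 = 1 → F x = x) →
    ∀ x y z : ↥U, z.1 = x.1 * y.1 → (F z).1 = (F x).1 * (F y).1

/-- `N` is an `X_U`-group: `N ≤ U` and the restriction of `e(N)` to `U` is a
relation of the restriction `X_U`. -/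
def SubXGroup {G : Type u} [Group G] (X : CohCfg G) (U N : Subgroup G) : Prop :=
  N ≤ U ∧ ∀ s ∈ X.S, (∃ p ∈ s, p.1 ∈ U ∧ p.2 ∈ U ∧ p.1⁻¹ * p.2 ∈ N) →
    ∀ p ∈ s, p.1 ∈ U → p.2 ∈ U → p.1⁻¹ * p.2 ∈ N

end CohCfg

/-!
A circulant scheme is a Schur ring over `ZMod n`. If it is normal, it has too few automorphisms to
be a wedge, so by multipliers the elements of order prime to a given prime form a union of basic
sets, and so does each Sylow subgroup. Comparing the basis relations of the point extension at `0`
that meet a Sylow subgroup, one finds `2 * (z' - z) = 0` whenever `(1, z)` and `(1, z')` lie in one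
of them. Were `z' ≠ z`, exchanging the points of all such pairs would be an automorphism fixing `0`
and `1`, hence the identity by normality. So the basis relations starting at a generator are
functional. A configuration with such a point is separable, and a bijection that induces the
extension of a sesquiclosed isomorphism induces the isomorphism itself.
-/

/-! ### Schur rings -/

section Counting

theorem natCast_surjective_of_isAddCyclic {R : Type*} [Ring R] [Finite R] [IsAddCyclic R] :
    Function.Surjective (Nat.cast : ℕ → R) := by
  obtain ⟨g, hg⟩ := IsAddCyclic.exists_ofOrder_eq_natCard (α := R)
  have hdvd : addOrderOf g ∣ addOrderOf (1 : R) := by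
    rw [addOrderOf_dvd_iff_nsmul_eq_zero, ← one_mul g, ← smul_mul_assoc,
      addOrderOf_nsmul_eq_zero, zero_mul]
  have htop := (AddSubgroup.card_eq_iff_eq_top (AddSubgroup.zmultiples (1 : R))).1 <| by
    rw [Nat.card_zmultiples]
    exact (addOrderOf_dvd_natCard 1).antisymm (hg ▸ hdvd)
  intro x
  have hx : x ∈ AddSubmonoid.multiples (1 : R) := by
    rw [mem_multiples_iff_mem_zmultiples, htop]
    trivial
  obtain ⟨k, rfl⟩ := hx
  exact ⟨k, by simp⟩

theorem ncard_modEq_ncard_fixed {α : Type*} [Finite α] {q : ℕ} [Fact q.Prime] {g : α → α}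
    (hg : g^[q] = id) {T : Set α} (hT : MapsTo g T T) :
    T.ncard ≡ {x ∈ T | g x = x}.ncard [MOD q] := by
  classical
  have := Fintype.ofFinite T
  have hperiod : (hT.restrict g T T)^[q ^ 1] = id := by
    funext x
    rw [hT.iterate_restrict]
    exact Subtype.ext (by simp [hg])
  have hcard := Equiv.Perm.card_fixedPoints_modEq hperiod
  rw [← Nat.card_eq_fintype_card, ← Nat.card_eq_fintype_card, Nat.card_coe_set_eq] at hcard
  have himage : {x ∈ T | g x = x} = Subtype.val '' Function.fixedPoints (hT.restrict g T T) := by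
    ext x
    simp [Function.IsFixedPt, Subtype.ext_iff, and_comm]
  rwa [himage, Set.ncard_image_of_injective _ Subtype.val_injective]

theorem dvd_ncard_of_add_mem {A : Type*} [AddCommGroup A] [Finite A] {q : ℕ} [Fact q.Prime]
    {e : A} (he : e ≠ 0) (hqe : q • e = 0) {T : Set A} (hT : ∀ x ∈ T, x + e ∈ T) :
    q ∣ T.ncard := by
  have hg : (· + e)^[q] = id := by
    funext x
    simp [hqe]
  rw [← Nat.modEq_zero_iff_dvd]
  simpa [he] using ncard_modEq_ncard_fixed hg hT

theorem ncard_eq_ncard_image_mul {α β : Type*} [Finite α] {S : Set α} {f : α → β} {m : ℕ}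
    (h : ∀ s ∈ S, {t ∈ S | f t = f s}.ncard = m) : S.ncard = (f '' S).ncard * m := by
  classical
  obtain ⟨T, rfl⟩ := S.toFinite.exists_finset_coe
  rw [← Finset.coe_image, Set.ncard_coe_finset, Set.ncard_coe_finset,
    Finset.card_eq_sum_card_image f]
  refine Finset.sum_const_nat fun b hb ↦ ?_
  obtain ⟨s, hs, rfl⟩ := Finset.mem_image.1 hb
  rw [← h s hs, ← Set.ncard_coe_finset, Finset.coe_filter]
  rfl

/-- Both counts of `h` count, besides the pairs of `e`-isolated points of `S`, pairs exchanged by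
replacing `s` with `e s` whenever both lie in `S`. -/
theorem ncard_isolated_inter_preimage {α : Type*} [Finite α] {e τ : α → α}
    (he : Function.Involutive e) (hτ : ∀ s, τ (e s) = e (τ s)) {S : Set α}
    (h : {s ∈ S | τ s ∈ S}.ncard = {s ∈ S | e (τ s) ∈ S}.ncard) :
    {s ∈ S \ e ⁻¹' S | τ s ∈ S \ e ⁻¹' S}.ncard =
      {s ∈ S \ e ⁻¹' S | e (τ s) ∈ S \ e ⁻¹' S}.ncard := by
  classical
  set P := S \ e ⁻¹' S
  have hP (s : α) : s ∈ P ↔ s ∈ S ∧ e s ∉ S := Iff.rfl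
  let g (s : α) : α := if e s ∈ S then e s else s
  have hg (s : α) (hs : s ∈ S) : g (g s) = s := by
    by_cases hes : e s ∈ S <;> simp [g, hes, he s, hs]
  have hle (σ : α → α) (hσ : ∀ s, σ (e s) = e (σ s)) :
      MapsTo g ({s ∈ S | σ s ∈ S} \ {s ∈ P | σ s ∈ P})
        ({s ∈ S | e (σ s) ∈ S} \ {s ∈ P | e (σ s) ∈ P}) := by
    rintro s ⟨⟨hs, hσs⟩, hn⟩
    by_cases hes : e s ∈ S <;> simp_all [g, he _]
  have hrest : ({s ∈ S | τ s ∈ S} \ {s ∈ P | τ s ∈ P}).ncard =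
      ({s ∈ S | e (τ s) ∈ S} \ {s ∈ P | e (τ s) ∈ P}).ncard := by
    have hτe : ∀ s, e (τ (e s)) = e (e (τ s)) := fun s ↦ by rw [hτ]
    refine Set.BijOn.ncard_eq (f := g) ⟨hle τ hτ, ?_, ?_⟩
    · exact fun s hs t ht hst ↦ by rw [← hg s hs.1.1, hst, hg t ht.1.1]
    · intro s hs
      refine ⟨g s, ?_, hg s hs.1.1⟩
      simpa [he _] using hle (fun s ↦ e (τ s)) hτe hs
  have hsub (σ : α → α) : {s ∈ P | σ s ∈ P} ⊆ {s ∈ S | σ s ∈ S} := fun s hs ↦ ⟨hs.1.1, hs.2.1⟩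
  have h0 := Set.ncard_sdiff_add_ncard_of_subset (hsub τ)
  have h1 := Set.ncard_sdiff_add_ncard_of_subset (hsub fun s ↦ e (τ s))
  omega

open AddMonoidAlgebra in
theorem coeff_sum_single_one {k A ι : Type*} [Semiring k] [DecidableEq A]
    (T : Finset ι) (f : ι → A) (c : A) :
    (∑ x ∈ T, (single (f x) 1 : AddMonoidAlgebra k A)).coeff c =
      (T.filter fun x ↦ f x = c).card := by
  simp [coeff_sum, Finsupp.single_apply]

end Counting

/-- A Schur ring over `R`, encoded by the equivalence relation whose classes are its basic sets.
The structure constants enter as permutations: for `a`, `b` in one basic set, some permutation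
matches the decompositions `a = x + (a - x)` and `b = x' + (b - x')` basic set by basic set. -/
structure SchurRing (R : Type*) [AddCommGroup R] extends Setoid R where
  eq_zero : ∀ {b}, r 0 b → b = 0
  exists_perm : ∀ {a b}, r a b → ∃ σ : Equiv.Perm R, ∀ x, r x (σ x) ∧ r (a - x) (b - σ x)

namespace SchurRing

section AddCommGroup

variable {R : Type*} [AddCommGroup R] (X : SchurRing R)

/-- `S` is a union of basic sets. -/
def Saturated (S : Set R) : Prop := ∀ ⦃x y⦄, X.r x y → x ∈ S → y ∈ S

/-- Every automorphism of the associated Cayley scheme that fixes `0` is additive. -/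
def IsNormal : Prop :=
  ∀ f : R → R, Function.Bijective f → (∀ x y, X.r (y - x) (f y - f x)) → f 0 = 0 →
    ∀ x y, f (x + y) = f x + f y

variable {X} {x y z : R}

theorem symm (h : X.r x y) : X.r y x := X.iseqv.symm h

theorem trans (h : X.r x y) (h' : X.r y z) : X.r x z := X.iseqv.trans h h'

theorem refl (x : R) : X.r x x := X.iseqv.refl x

theorem Saturated.mem_iff {S : Set R} (hS : X.Saturated S) (h : X.r x y) : x ∈ S ↔ y ∈ S :=
  ⟨hS h, hS (symm h)⟩

theorem ncard_decompositions_eq (h : X.r x y) (s t : R) :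
    {z | X.r s z ∧ X.r t (x - z)}.ncard = {z | X.r s z ∧ X.r t (y - z)}.ncard := by
  obtain ⟨σ, hσ⟩ := X.exists_perm h
  refine Set.ncard_congr (fun z _ ↦ σ z)
    (fun z hz ↦ ⟨trans hz.1 (hσ z).1, trans hz.2 (hσ z).2⟩) (fun _ _ _ _ ↦ σ.injective.eq_iff.1) ?_
  refine fun z hz ↦ ⟨σ.symm z, ⟨trans hz.1 ?_, trans hz.2 ?_⟩, σ.apply_symm_apply z⟩
  · simpa using symm (hσ (σ.symm z)).1
  · simpa using symm (hσ (σ.symm z)).2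

end AddCommGroup

section Wedge

variable {R : Type*} [CommRing R] {X : SchurRing R}

open Classical in
theorem coset_translation_rel {I : Ideal R} {e : R} (he : e ∈ I)
    (h : ∀ x ∉ I, X.r x (x + e)) (c x y : R) :
    X.r (y - x) ((if y - c ∈ I then y + e else y) - (if x - c ∈ I then x + e else x)) := by
  by_cases hx : x - c ∈ I <;> by_cases hy : y - c ∈ I <;> simp only [hx, hy, if_true, if_false]
  · exact (add_sub_add_right_eq_sub y x e).symm ▸ refl _
  · have hyx : y - (x + e) ∉ I := fun h' ↦ hy <| by
      convert I.add_mem (I.add_mem h' he) hx using 1; ring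
    convert symm (h _ hyx) using 1; ring
  · have hyx : y - x ∉ I := fun h' ↦ hx <| by
      convert I.sub_mem hy h' using 1; ring
    convert h _ hyx using 1; ring
  · exact refl _

open Classical in
theorem coset_translation_bijective [Finite R] {I : Ideal R} {e : R} (he : e ∈ I) (c : R) :
    Function.Bijective fun x ↦ if x - c ∈ I then x + e else x := by
  have hmem : ∀ {x}, x + e - c ∈ I ↔ x - c ∈ I := fun {x} ↦ by
    rw [add_sub_right_comm, I.add_mem_iff_left he]
  refine Finite.injective_iff_bijective.1 fun x y hxy ↦ ?_
  by_cases hx : x - c ∈ I <;> by_cases hy : y - c ∈ I <;>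
    simp only [hx, hy, if_true, if_false] at hxy
  · exact add_right_cancel hxy
  · exact absurd (hmem.2 hx) (hxy ▸ hy)
  · exact absurd (hmem.2 hy) (hxy ▸ hx)
  · exact hxy

theorem IsNormal.exists_not_rel_add [Finite R] (hX : X.IsNormal) {I : Ideal R}
    (hI : (1 : R) ∉ I) {e : R} (he : e ∈ I) (he0 : e ≠ 0) (he2 : (2 : R) ∈ I → 2 * e ≠ 0) :
    ∃ x ∉ I, ¬ X.r x (x + e) := by
  classical
  by_contra! hcon
  have hadd : ∀ c ∉ I, _ := fun c hc ↦
    hX _ (coset_translation_bijective he c) (coset_translation_rel he hcon c)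
      (if_neg (by simpa using hc)) 1 1
  have h21 : (1 + 1 - 1 : R) ∉ I := by simpa using hI
  by_cases h2 : (2 : R) ∈ I
  · have := hadd 1 hI
    rw [if_neg h21, sub_self, if_pos I.zero_mem] at this
    exact he2 h2 (by linear_combination -this)
  · have h12 : (1 - 2 : R) ∉ I := fun h ↦ hI (by convert I.neg_mem h using 1; ring)
    have := hadd 2 h2
    rw [if_pos (by simp [one_add_one_eq_two]), if_neg h12] at this
    exact he0 (by linear_combination this)

end Wedge

section Frobenius

open AddMonoidAlgebra

variable {R : Type*} [AddCommGroup R] [Finite R] (X : SchurRing R)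

theorem coeff_mul_eq_of_rel {k : Type*} [Semiring k] {F K : AddMonoidAlgebra k R}
    (hF : ∀ a b, X.r a b → F.coeff a = F.coeff b) (hK : ∀ a b, X.r a b → K.coeff a = K.coeff b)
    {a b : R} (hab : X.r a b) : (F * K).coeff a = (F * K).coeff b := by
  classical
  have := Fintype.ofFinite R
  have hconv (c : R) : (F * K).coeff c = ∑ x, F.coeff x * K.coeff (c - x) := by
    rw [coeff_mul_antidiag F K c (Finset.univ.image fun x ↦ (x, c - x)),
      Finset.sum_image fun x _ y _ hxy ↦ congrArg Prod.fst hxy]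
    rintro ⟨x, y⟩
    simpa [eq_comm] using eq_sub_iff_add_eq'
  obtain ⟨σ, hσ⟩ := X.exists_perm hab
  rw [hconv, hconv, ← Equiv.sum_comp σ (fun x ↦ F.coeff x * K.coeff (b - x))]
  exact Finset.sum_congr rfl fun x _ ↦ by rw [hF _ _ (hσ x).1, hK _ _ (hσ x).2]

theorem coeff_pow_eq_of_rel {k : Type*} [Semiring k] {F : AddMonoidAlgebra k R}
    (hF : ∀ a b, X.r a b → F.coeff a = F.coeff b) (m : ℕ) {a b : R} (hab : X.r a b) :
    (F ^ m).coeff a = (F ^ m).coeff b := by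
  classical
  induction m generalizing a b with
  | zero =>
    have h0 : 0 = a ↔ 0 = b := by
      constructor
      · rintro rfl; exact (X.eq_zero hab).symm
      · rintro rfl; exact (X.eq_zero (symm hab)).symm
    rw [pow_zero, one_def, coeff_single, Finsupp.single_apply, Finsupp.single_apply]
    simp only [h0]
  | succ m ih => exact pow_succ F m ▸ X.coeff_mul_eq_of_rel (fun _ _ h ↦ ih h) hF hab

/-- The number of solutions of `q • x = z` in the basic set of `s`. -/
noncomputable def rootCount (q : ℕ) (s z : R) : ℕ := {x | X.r s x ∧ q • x = z}.ncard

/-- Wielandt's form of Schur's theorem: expand the `q`-th power of a basic set sum modulo `q`. -/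
theorem rootCount_modEq {q : ℕ} [Fact q.Prime] (s : R) {a b : R} (hab : X.r a b) :
    X.rootCount q s a ≡ X.rootCount q s b [MOD q] := by
  classical
  have := Fintype.ofFinite R
  let F : AddMonoidAlgebra (ZMod q) R := ∑ x with X.r s x, single x 1
  have hF (a b : R) (hab : X.r a b) : F.coeff a = F.coeff b := by
    have hsab : X.r s a ↔ X.r s b := ⟨fun h ↦ trans h hab, fun h ↦ trans h (symm hab)⟩
    simp [F, coeff_sum, Finsupp.single_apply, hsab]
  have : CharP (AddMonoidAlgebra (ZMod q) R) q :=
    charP_of_injective_algebraMap (algebraMap (ZMod q) (AddMonoidAlgebra (ZMod q) R)).injective q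
  have hpow (c : R) : (F ^ q).coeff c = X.rootCount q s c := by
    simp only [F, sum_pow_char, single_pow, one_pow]
    rw [coeff_sum_single_one, Finset.filter_filter, rootCount,
      ← Set.ncard_coe_finset, Finset.coe_filter_univ]
  rw [← ZMod.natCast_eq_natCast_iff, ← hpow, ← hpow]
  exact X.coeff_pow_eq_of_rel hF q hab

variable {X} {q : ℕ} [Fact q.Prime] {s a b : R}

theorem exists_rel_nsmul_eq (hab : X.r a b) (hd : ¬ q ∣ X.rootCount q s a) :
    ∃ x, X.r s x ∧ q • x = b := by
  by_contra! hcon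
  have hempty : {x | X.r s x ∧ q • x = b} = ∅ := by
    ext x; simpa using hcon x
  refine hd (((X.rootCount_modEq s hab).dvd_iff dvd_rfl).2 ?_)
  simp [rootCount, hempty]

end Frobenius

section Cyclic

variable {R : Type*} [CommRing R] [Finite R] (X : SchurRing R)

/-- The units of `R` whose multiplication permutes the basic sets. -/
def multipliers : Submonoid Rˣ where
  carrier := {u | ∀ x y, X.r x y → X.r (u * x) (u * y)}
  one_mem' := by simp
  mul_mem' {u v} hu hv x y h := by simpa [mul_assoc] using hu _ _ (hv _ _ h)

theorem prime_unit_mem_multipliers {q : ℕ} [Fact q.Prime] {v : Rˣ} (hv : (v : R) = q) :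
    v ∈ X.multipliers := by
  have hinv : v⁻¹ ∈ X.multipliers := by
    intro x y hxy
    have hroot (s : R) (z : R) : q • s = z ↔ s = ↑v⁻¹ * z := by
      rw [nsmul_eq_mul, ← hv, Units.eq_inv_mul_iff_mul_eq]
    have hone : X.rootCount q (↑v⁻¹ * x) x = 1 := by
      refine Set.ncard_eq_one.2 ⟨↑v⁻¹ * x, Set.ext fun s ↦ ?_⟩
      simp only [Set.mem_ofPred_eq, hroot, Set.mem_singleton_iff, and_iff_right_iff_imp]
      rintro rfl
      exact refl _
    obtain ⟨s, hs, hsy⟩ := exists_rel_nsmul_eq (q := q) (s := ↑v⁻¹ * x) hxy <| by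
      simp [hone, (Fact.out : q.Prime).ne_one]
    exact (hroot _ _).1 hsy ▸ hs
  have hmem : v ∈ Submonoid.powers v⁻¹ := by
    rw [← SetLike.mem_coe, powers_eq_zpowers]
    simp
  exact (Submonoid.powers_le.2 hinv) hmem

variable {X} [IsAddCyclic R] {u x y : R}

/-- Schur's theorem on multipliers. -/
theorem unit_mul (hu : IsUnit u) (h : X.r x y) : X.r (u * x) (u * y) := by
  obtain ⟨k, rfl⟩ := natCast_surjective_of_isAddCyclic u
  induction k using Nat.recOnMul generalizing x y with
  | zero => simp
  | one => simpa using h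
  | prime p hp =>
    have : Fact p.Prime := ⟨hp⟩
    simpa using X.prime_unit_mem_multipliers hu.unit_spec _ _ h
  | mul a b ha hb =>
    rw [Nat.cast_mul] at hu
    rw [Nat.cast_mul, mul_assoc, mul_assoc]
    exact ha (hb h (isUnit_of_mul_isUnit_right hu)) (isUnit_of_mul_isUnit_left hu)

theorem unit_mul_iff (hu : IsUnit u) : X.r (u * x) (u * y) ↔ X.r x y := by
  refine ⟨fun h ↦ ?_, unit_mul hu⟩
  obtain ⟨v, rfl⟩ := hu
  simpa using unit_mul v⁻¹.isUnit h

theorem neg_rel (h : X.r x y) : X.r (-x) (-y) := by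
  simpa using unit_mul isUnit_one.neg h

variable (X) in
/-- The largest union of basic sets inside `I`, as an ideal. -/
def core (I : Ideal R) : Ideal R :=
  let M : AddSubmonoid R :=
    { carrier := {x | ∀ y, X.r x y → y ∈ I}
      zero_mem' := fun y hy ↦ X.eq_zero hy ▸ I.zero_mem
      add_mem' := fun {x x'} hx hx' z hz ↦ by
        obtain ⟨σ, hσ⟩ := X.exists_perm hz
        have hx'z := (hσ x).2
        rw [add_sub_cancel_left] at hx'z
        simpa using I.add_mem (hx _ (hσ x).1) (hx' _ hx'z) }
  { M with
    smul_mem' := fun c x hx ↦ by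
      obtain ⟨k, rfl⟩ := natCast_surjective_of_isAddCyclic c
      rw [Nat.cast_smul_eq_nsmul]
      exact M.nsmul_mem hx k }

end Cyclic

end SchurRing

/-! ### Arithmetic modulo prime powers -/

section PrimePowerModulus

variable {q a : ℕ}

local notation "A" => ZMod (q ^ a)

theorem natCast_pow_eq_zero {b : ℕ} (h : a ≤ b) : (q : A) ^ b = 0 := by
  rw [← Nat.cast_pow, ZMod.natCast_eq_zero_iff]
  exact pow_dvd_pow q h

theorem natCast_mul_pow_pred [NeZero a] : (q : A) * (q : A) ^ (a - 1) = 0 := by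
  rw [← pow_succ']
  exact natCast_pow_eq_zero (by omega)

theorem isUnit_one_add_natCast_mul (t : A) : IsUnit (1 + q * t) :=
  IsNilpotent.isUnit_one_add ⟨a, by rw [mul_pow, natCast_pow_eq_zero le_rfl, zero_mul]⟩

theorem isUnit_of_natCast_dvd_sub_one {v : A} (hv : (q : A) ∣ v - 1) : IsUnit v := by
  obtain ⟨t, ht⟩ := hv
  rw [← sub_add_cancel v 1, ht, add_comm]
  exact isUnit_one_add_natCast_mul t

theorem mul_eq_self_of_natCast_dvd_sub_one {v t : A} (hv : (q : A) ∣ v - 1) (ht : q * t = 0) :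
    v * t = t := by
  obtain ⟨c, hc⟩ := hv
  linear_combination t * hc + c * ht

theorem exists_pow_sub_one_eq {k : A} (hk : (2 * q : A) ∣ k - 1) :
    ∃ t, k ^ q - 1 = (k - 1) * (q * (1 + q * t)) := by
  obtain ⟨d, hd⟩ := hk
  have hpow (i : ℕ) : ∃ c, k ^ i = 1 + i * (k - 1) + c * (k - 1) ^ 2 := by
    obtain ⟨c, hc⟩ := Polynomial.powAddExpansion 1 (k - 1) i
    exact ⟨c, by simpa using hc⟩
  choose c hc using hpow
  have hid : (∑ i ∈ Finset.range q, (i : A)) * 2 = q * (q - 1 : ℕ) := by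
    rw [← Nat.cast_sum, ← Nat.cast_mul, ← Finset.sum_range_id_mul_two]
    push_cast
    rfl
  have hgeom : ∑ i ∈ Finset.range q, k ^ i = q + (∑ i ∈ Finset.range q, (i : A)) * (k - 1) +
      (∑ i ∈ Finset.range q, c i) * (k - 1) ^ 2 := by
    simp only [hc, Finset.sum_add_distrib, Finset.sum_mul, Finset.sum_const, Finset.card_range,
      nsmul_one]
  refine ⟨(q - 1 : ℕ) * d + 4 * (∑ i ∈ Finset.range q, c i) * d ^ 2, ?_⟩
  rw [← mul_geom_sum, hgeom, hd]
  linear_combination (2 * q ^ 2 * d ^ 2) * hid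

theorem exists_last_pow_moving {k y : A} (hk : (2 * q : A) ∣ k - 1) (hy : k * y ≠ y) :
    ∃ n, (k ^ n - 1) * y ≠ 0 ∧ q * ((k ^ n - 1) * y) = 0 := by
  classical
  have hex : ∃ i, (k ^ q ^ i - 1) * y = 0 := by
    obtain ⟨c, hc⟩ := dvd_sub_pow_of_dvd_sub ((dvd_mul_left _ _).trans hk) a
    rw [one_pow, natCast_pow_eq_zero a.le_succ, zero_mul] at hc
    exact ⟨a, by rw [hc, zero_mul]⟩
  have hne : Nat.find hex ≠ 0 := by
    rw [Ne, Nat.find_eq_zero, pow_zero, pow_one, sub_mul, one_mul, sub_eq_zero]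
    exact hy
  obtain ⟨i, hi⟩ := Nat.exists_eq_succ_of_ne_zero hne
  obtain ⟨s, hs⟩ := exists_pow_sub_one_eq (hk.trans (sub_one_dvd_pow_sub_one k (q ^ i)))
  have hroot := Nat.find_spec hex
  rw [hi, pow_succ, pow_mul, hs] at hroot
  refine ⟨q ^ i, Nat.find_min hex (by omega), ?_⟩
  refine (isUnit_one_add_natCast_mul s).mul_right_eq_zero.1 ?_
  linear_combination hroot

variable [Fact q.Prime]

theorem natCast_pow_ne_zero {b : ℕ} (h : b < a) : (q : A) ^ b ≠ 0 := by
  rw [← Nat.cast_pow, Ne, ZMod.natCast_eq_zero_iff,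
    Nat.pow_dvd_pow_iff_le_right (Fact.out : q.Prime).one_lt]
  omega

theorem exists_eq_natCast_pow_mul_unit {t : A} (ht : t ≠ 0) :
    ∃ b < a, ∃ u : Aˣ, t = (q : A) ^ b * u := by
  have hq : q.Prime := Fact.out
  obtain ⟨b, m, hm, hbm⟩ :=
    Nat.exists_eq_pow_mul_and_not_dvd (mt (ZMod.val_eq_zero t).1 ht) q hq.ne_one
  have htm : t = (q : A) ^ b * (m : A) := by
    rw [← ZMod.natCast_zmod_val t, hbm]; push_cast; rfl
  have hmq : m.Coprime (q ^ a) := ((hq.coprime_iff_not_dvd.2 hm).pow_left a).symm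
  refine ⟨b, not_le.1 fun hab ↦ ht ?_, ZMod.unitOfCoprime m hmq, htm⟩
  rw [htm, natCast_pow_eq_zero hab, zero_mul]

theorem exists_eq_natCast_pow_pred_mul [NeZero a] {t : A} (ht : q * t = 0) :
    ∃ j < q, t = (q : A) ^ (a - 1) * (j : A) := by
  have hq : q.Prime := Fact.out
  obtain ⟨c, rfl⟩ := Nat.exists_eq_succ_of_ne_zero (NeZero.ne a)
  have hdvd : q * q ^ c ∣ q * t.val := by
    rw [← pow_succ', ← ZMod.natCast_eq_zero_iff]
    push_cast
    rwa [ZMod.natCast_zmod_val]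
  obtain ⟨j, hj⟩ := Nat.dvd_of_mul_dvd_mul_left hq.pos hdvd
  refine ⟨j, ?_, ?_⟩
  · refine Nat.lt_of_mul_lt_mul_left (a := q ^ c) ?_
    rw [← hj, ← pow_succ]
    exact t.val_lt
  · rw [← ZMod.natCast_zmod_val t, hj]
    push_cast
    rfl

theorem natCast_pow_pred_ne_zero [NeZero a] : (q : A) ^ (a - 1) ≠ 0 :=
  natCast_pow_ne_zero (Nat.sub_one_lt (NeZero.ne a))

theorem dvd_natCast_pow_pred {t : A} (ht : t ≠ 0) : t ∣ (q : A) ^ (a - 1) := by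
  obtain ⟨b, hb, u, rfl⟩ := exists_eq_natCast_pow_mul_unit ht
  exact u.isUnit.mul_right_dvd.2 (pow_dvd_pow _ (by omega))

theorem natCast_mul_dvd_trichotomy {s t : A} (hs : s ≠ 0) (ht : t ≠ 0) :
    q * s ∣ t ∨ q * t ∣ s ∨ ∃ k, IsUnit k ∧ t = k * s := by
  have hdvd {b c : ℕ} (h : b < c) (u v : Aˣ) : (q : A) * (q ^ b * u) ∣ q ^ c * v := by
    rw [← mul_assoc, ← pow_succ']
    exact u.isUnit.mul_right_dvd.2 ((pow_dvd_pow _ h).mul_right _)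
  obtain ⟨b, -, u, rfl⟩ := exists_eq_natCast_pow_mul_unit hs
  obtain ⟨c, -, v, rfl⟩ := exists_eq_natCast_pow_mul_unit ht
  rcases lt_trichotomy b c with h | rfl | h
  · exact .inl (hdvd h u v)
  · exact .inr (.inr ⟨v * ↑u⁻¹, (v * u⁻¹).isUnit, by
      rw [mul_left_comm, mul_assoc, Units.inv_mul, mul_one]⟩)
  · exact .inr (.inl (hdvd h v u))

theorem isUnit_two_of_ne_two (hq2 : q ≠ 2) : IsUnit (2 : A) := by
  exact_mod_cast (ZMod.isUnit_iff_coprime 2 (q ^ a)).2 <|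
    ((Nat.coprime_primes Nat.prime_two Fact.out).2 hq2.symm).pow_right a

theorem isUnit_iff_not_natCast_dvd [NeZero a] {t : A} : IsUnit t ↔ ¬ (q : A) ∣ t := by
  constructor
  · rintro ht ⟨s, rfl⟩
    exact natCast_pow_pred_ne_zero <|
      ((isUnit_of_mul_isUnit_left ht).mul_right_eq_zero).1 natCast_mul_pow_pred
  · intro h
    have ht : t ≠ 0 := by rintro rfl; exact h (dvd_zero _)
    obtain ⟨b, -, u, rfl⟩ := exists_eq_natCast_pow_mul_unit ht
    rcases b.eq_zero_or_pos with rfl | hb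
    · simp
    · exact absurd ((dvd_pow_self _ hb.ne').mul_right _) h

theorem natCast_mul_dvd_of_natCast_mul_eq_zero [NeZero a] {y z : A} (hy : q * y ≠ 0)
    (hz : q * z = 0) : q * y ∣ z := by
  obtain ⟨j, -, rfl⟩ := exists_eq_natCast_pow_pred_mul hz
  exact (dvd_natCast_pow_pred hy).mul_right _

theorem exists_unit_mul_eq_add_pow_pred [NeZero a] {y z : A} (hy : q * y ≠ 0) (hz : q * y ∣ z)
    (t : A) : ∃ v, IsUnit v ∧ v * y = y + q ^ (a - 1) * t ∧ v * z = z := by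
  obtain ⟨s, hs⟩ := dvd_natCast_pow_pred hy
  obtain ⟨c, rfl⟩ := hz
  refine ⟨1 + q * (s * t), isUnit_one_add_natCast_mul _, by linear_combination -t * hs, ?_⟩
  linear_combination (t * c : A) * natCast_mul_pow_pred (q := q) (a := a) - (q * t * c : A) * hs

/-- `2 * q ∣ k - 1` says `k ≡ 1` modulo `q` if `q` is odd, and modulo `4` if `q = 2`. -/
theorem exists_pow_mul_eq_add_pow_pred [NeZero a] {k y : A} (hk : (2 * q : A) ∣ k - 1)
    (hy : k * y ≠ y) (t : A) : ∃ N, k ^ N * y = y + q ^ (a - 1) * t := by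
  obtain ⟨n, hn, hn'⟩ := exists_last_pow_moving hk hy
  obtain ⟨j, hj, hjn⟩ := exists_eq_natCast_pow_pred_mul hn'
  have hj0 : j ≠ 0 := by rintro rfl; exact hn (by simpa using hjn)
  have hcop : j.Coprime (q ^ a) := ((Fact.out : q.Prime).coprime_iff_not_dvd.2
    (Nat.not_dvd_of_pos_of_lt (Nat.pos_of_ne_zero hj0) hj) |>.pow_left a).symm
  have hstep (i : ℕ) : (k ^ n) ^ i * y = y + i * ((k ^ n - 1) * y) := by
    induction i with
    | zero => simp
    | succ i ih =>
      have hqk : (q : A) ∣ k ^ n - 1 :=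
        (dvd_mul_left _ _).trans (hk.trans (sub_one_dvd_pow_sub_one k n))
      have hfix := mul_eq_self_of_natCast_dvd_sub_one hqk hn'
      rw [pow_succ', mul_assoc, ih]
      push_cast
      linear_combination (i : A) * hfix
  refine ⟨n * (t * ↑(ZMod.unitOfCoprime j hcop)⁻¹ : A).val, ?_⟩
  have hju := (ZMod.unitOfCoprime j hcop).mul_inv
  rw [ZMod.coe_unitOfCoprime] at hju
  rw [pow_mul, hstep, ZMod.natCast_zmod_val, hjn]
  linear_combination (q ^ (a - 1) * t : A) * hju

end PrimePowerModulus

section TwoPowerModulus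

variable {a : ℕ} [NeZero a] {k t : ZMod (2 ^ a)}

theorem isUnit_iff_not_two_dvd : IsUnit t ↔ ¬ 2 ∣ t := by
  simpa using isUnit_iff_not_natCast_dvd (q := 2) (t := t)

theorem two_dvd_sub_one (hk : IsUnit k) : 2 ∣ k - 1 := by
  obtain ⟨c, hc | hc⟩ := k.val.even_or_odd'
  · refine absurd ⟨(c : ZMod (2 ^ a)), ?_⟩ (isUnit_iff_not_two_dvd.1 hk)
    rw [← ZMod.natCast_zmod_val k, hc]; push_cast; rfl
  · refine ⟨(c : ZMod (2 ^ a)), ?_⟩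
    rw [← ZMod.natCast_zmod_val k, hc]; push_cast; ring

theorem two_dvd_sub (hk : IsUnit k) (ht : IsUnit t) : 2 ∣ k - t := by
  simpa using dvd_sub (two_dvd_sub_one hk) (two_dvd_sub_one ht)

theorem isUnit_of_two_dvd_sub (hk : IsUnit k) (h : 2 ∣ t - k) : IsUnit t := by
  rw [isUnit_iff_not_two_dvd] at hk ⊢
  exact fun ht ↦ hk (by simpa using dvd_sub ht h)

theorem four_dvd_two_mul_iff (ha : 2 ≤ a) : 4 ∣ 2 * t ↔ 2 ∣ t := by
  refine ⟨fun ⟨c, hc⟩ ↦ by_contra fun ht ↦ ?_, fun ⟨c, hc⟩ ↦ ⟨c, by rw [hc]; ring⟩⟩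
  have hu : IsUnit (t - 2 * c) :=
    isUnit_of_two_dvd_sub (isUnit_iff_not_two_dvd.2 ht) ⟨-c, by ring⟩
  have h2 : (2 : ZMod (2 ^ a)) = 0 :=
    hu.mul_left_cancel (by linear_combination hc)
  exact natCast_pow_ne_zero (q := 2) (b := 1) (by omega : 1 < a) (by simpa using h2)

theorem not_four_dvd_two (ha : 2 ≤ a) : ¬ (4 : ZMod (2 ^ a)) ∣ 2 := fun h ↦
  isUnit_iff_not_two_dvd.1 (isUnit_one : IsUnit (1 : ZMod (2 ^ a))) <|
    (four_dvd_two_mul_iff (a := a) (t := 1) ha).1 (by simpa using h)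

theorem four_dvd_sub_one_or_add_one (hk : IsUnit k) : 4 ∣ k - 1 ∨ 4 ∣ k + 1 := by
  obtain ⟨c, hc⟩ := two_dvd_sub_one hk
  by_cases h : 2 ∣ c
  · obtain ⟨d, rfl⟩ := h
    exact .inl ⟨d, by rw [hc]; ring⟩
  · obtain ⟨d, hd⟩ := two_dvd_sub_one (isUnit_iff_not_two_dvd.2 h)
    exact .inr ⟨d + 1, by linear_combination hc + 2 * hd⟩

theorem two_pow_pred_ne_zero : (2 : ZMod (2 ^ a)) ^ (a - 1) ≠ 0 := by
  simpa using natCast_pow_pred_ne_zero (q := 2) (a := a)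

theorem eq_zero_or_eq_two_pow_pred_of_two_mul_eq_zero (ht : 2 * t = 0) :
    t = 0 ∨ t = 2 ^ (a - 1) := by
  obtain ⟨j, hj, h⟩ := exists_eq_natCast_pow_pred_mul (q := 2) (t := t) (by simpa using ht)
  interval_cases j
  · exact .inl (by simpa using h)
  · exact .inr (by simpa using h)

end TwoPowerModulus

/-! ### Sylow subgroups of normal Schur rings -/

namespace SchurRing

section PrimePart

variable {q a : ℕ} {B : Type*} [CommRing B]

/-- The elements of order dividing `q`, parametrised by `ZMod (q ^ a)`. -/
def socle (t : ZMod (q ^ a)) : ZMod (q ^ a) × B := (q ^ (a - 1) * t, 0)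

theorem nsmul_socle [NeZero a] (t : ZMod (q ^ a)) : q • (socle t : ZMod (q ^ a) × B) = 0 := by
  simp [socle, ← mul_assoc, natCast_mul_pow_pred]

theorem isUnit_mk_one {k : ZMod (q ^ a)} (hk : IsUnit k) : IsUnit ((k, 1) : ZMod (q ^ a) × B) :=
  Prod.isUnit_iff.2 ⟨hk, isUnit_one⟩

theorem pow_mul_rel [NeZero q] [Finite B] [IsAddCyclic (ZMod (q ^ a) × B)]
    {X : SchurRing (ZMod (q ^ a) × B)} {x : ZMod (q ^ a) × B} {k : ZMod (q ^ a)} (hk : IsUnit k)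
    (h : X.r x ((k, 1) * x)) (N : ℕ) :
    X.r x ((k ^ N, 1) * x) := by
  induction N with
  | zero => simp [← Prod.one_eq_mk]
  | succ N ih =>
    convert trans h (unit_mul (isUnit_mk_one hk) ih) using 1
    ext <;> simp [pow_succ']; ring

variable (q a B) in
theorem isUnit_natCast_of_isAddCyclic_prod [Fact q.Prime] [NeZero a] [Finite B]
    [IsAddCyclic (ZMod (q ^ a) × B)] : IsUnit (q : B) := by
  obtain ⟨k, hk⟩ := natCast_surjective_of_isAddCyclic ((0, 1) : ZMod (q ^ a) × B)
  obtain ⟨h0, h1⟩ := Prod.mk.inj hk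
  rw [ZMod.natCast_eq_zero_iff] at h0
  obtain ⟨m, rfl⟩ := (dvd_pow_self q (NeZero.ne a)).trans h0
  refine IsUnit.of_mul_eq_one (m : B) ?_
  simpa using h1

variable [Fact q.Prime] [NeZero a]

theorem socle_one_ne_zero : (socle 1 : ZMod (q ^ a) × B) ≠ 0 := fun h ↦
  natCast_pow_pred_ne_zero (by simpa [socle] using congrArg Prod.fst h)

variable [Finite B] [IsAddCyclic (ZMod (q ^ a) × B)] {X : SchurRing (ZMod (q ^ a) × B)}
  {x y z : ZMod (q ^ a) × B}

theorem exists_eq_add_socle (h : q • y = q • x) : ∃ j < q, y = x + socle (j : ZMod (q ^ a)) := by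
  have hB := isUnit_natCast_of_isAddCyclic_prod q a B
  have h1 : q * y.1 = q * x.1 := by simpa using congrArg Prod.fst h
  have h2 : q * y.2 = q * x.2 := by simpa using congrArg Prod.snd h
  obtain ⟨j, hj, hyx⟩ := exists_eq_natCast_pow_pred_mul (t := y.1 - x.1) (by linear_combination h1)
  exact ⟨j, hj, Prod.ext (by simp [socle, ← hyx]) (by simp [socle, hB.mul_left_cancel h2])⟩

variable (X x) in
/-- The coset of `x` modulo the subgroup of order `q` lies in one basic set. -/
def SocleStable : Prop := ∀ t, X.r x (x + socle t)

theorem not_dvd_rootCount_of_not_socleStable (hx : ¬ X.SocleStable x) :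
    ¬ q ∣ X.rootCount q x (q • x) := by
  obtain ⟨t, ht⟩ := not_forall.1 hx
  set F := {y | X.r x y ∧ q • y = q • x}
  set C := (fun j : ℕ ↦ x + socle (j : ZMod (q ^ a))) '' (Finset.range q)
  have hFC : F ⊂ C := by
    refine (Set.ssubset_iff_of_subset ?_).2 ⟨x + socle t, ?_, fun h ↦ ht h.1⟩
    · rintro y ⟨-, hy⟩
      obtain ⟨j, hj, rfl⟩ := exists_eq_add_socle hy
      exact ⟨j, by simpa using hj, rfl⟩
    · obtain ⟨j, hj, h⟩ := exists_eq_add_socle (x := x) (y := x + socle t) <| by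
        rw [smul_add, nsmul_socle, add_zero]
      exact ⟨j, by simpa using hj, h.symm⟩
  have hlt : F.ncard < q := calc
    F.ncard < C.ncard := Set.ncard_lt_ncard hFC
    _ ≤ (Finset.range q : Set ℕ).ncard := Set.ncard_image_le (Finset.finite_toSet _)
    _ = q := by rw [Set.ncard_coe_finset, Finset.card_range]
  exact Nat.not_dvd_of_pos_of_lt ((Set.ncard_pos).2 ⟨x, refl x, rfl⟩) hlt

theorem add_socle_rel (h : X.r y z) (hy : q * y.1 ≠ 0) (hz : q * y.1 ∣ z.1) (t : ZMod (q ^ a)) :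
    X.r (y + socle t) z := by
  obtain ⟨v, hv, hvy, hvz⟩ := exists_unit_mul_eq_add_pow_pred hy hz t
  convert unit_mul (isUnit_mk_one hv) h using 1
  · ext <;> simp [socle, hvy]
  · ext <;> simp [hvz]

theorem zero_prod_mem_core (hx : q * x.1 = 0) (hst : ¬ X.SocleStable x) :
    ((0, q * x.2) : ZMod (q ^ a) × B) ∈ X.core (RingHom.ker (RingHom.fst _ B)) := by
  intro z hz
  have hqx : (0, q * x.2) = q • x := by ext <;> simp [hx]
  rw [hqx] at hz
  have hndvd := not_dvd_rootCount_of_not_socleStable hst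
  rw [(X.rootCount_modEq x hz).dvd_iff dvd_rfl] at hndvd
  by_contra hz1
  refine hndvd (dvd_ncard_of_add_mem socle_one_ne_zero (nsmul_socle 1) ?_)
  rintro s ⟨hs, rfl⟩
  have hs1 : q * s.1 ≠ 0 := by simpa using hz1
  refine ⟨symm (add_socle_rel (symm hs) hs1 ?_ 1), by rw [smul_add, nsmul_socle, add_zero]⟩
  exact natCast_mul_dvd_of_natCast_mul_eq_zero hs1 hx

theorem socleStable_of_mul_rel {k : ZMod (q ^ a)} (hk : 2 * (q : ZMod (q ^ a)) ∣ k - 1)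
    (h : X.r x ((k, 1) * x)) (hkx : k * x.1 ≠ x.1) : X.SocleStable x := by
  intro t
  obtain ⟨N, hN⟩ := exists_pow_mul_eq_add_pow_pred hk hkx t
  have hku := isUnit_of_natCast_dvd_sub_one ((dvd_mul_left _ _).trans hk)
  convert pow_mul_rel hku h N using 1
  ext <;> simp [socle, hN]

theorem SocleStable.of_nsmul (hq2 : q ≠ 2) (hx : q * x.1 ≠ 0) (hst : X.SocleStable (q • x)) :
    X.SocleStable x := by
  have hB := isUnit_natCast_of_isAddCyclic_prod q a B
  by_contra hnst
  have hroot (t : ZMod (q ^ a)) : ∃ s, X.r x s ∧ q * s.1 = q * x.1 + q ^ (a - 1) * t ∧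
      s.2 = x.2 := by
    obtain ⟨s, hs, h⟩ :=
      exists_rel_nsmul_eq (hst t) (not_dvd_rootCount_of_not_socleStable hnst)
    obtain ⟨h1, h2⟩ := Prod.ext_iff.1 h
    exact ⟨s, hs, by simpa [socle] using h1, hB.mul_left_cancel (by simpa [socle] using h2)⟩
  refine hnst ?_
  by_cases hqq : q * (q * x.1) = 0
  · obtain ⟨j, -, hj⟩ := exists_eq_natCast_pow_pred_mul hqq
    obtain ⟨s, hs, hs1, -⟩ := hroot (-j)
    have hqs : q * s.1 = 0 := by rw [hs1, hj]; ring
    intro t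
    exact trans hs <| symm <|
      add_socle_rel hs hx (natCast_mul_dvd_of_natCast_mul_eq_zero hx hqs) t
  · obtain ⟨s, hs, hs1, hs2⟩ := hroot 1
    obtain ⟨c, hc⟩ := dvd_natCast_pow_pred hqq
    have hqd : q * (s.1 - x.1 - q * x.1 * c) = 0 := by linear_combination hs1 + hc
    obtain ⟨d, hd⟩ := natCast_mul_dvd_of_natCast_mul_eq_zero hqq hqd
    have hsx : (1 + q * (c + q * d)) * x.1 = s.1 := by linear_combination -hd
    have h2 : IsUnit (2 : ZMod (q ^ a)) := isUnit_two_of_ne_two hq2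
    refine socleStable_of_mul_rel (k := 1 + q * (c + q * d)) (by simp [h2.mul_left_dvd]) ?_ ?_
    · convert hs using 1
      ext <;> simp [hsx, hs2]
    · rw [hsx]
      intro h
      refine natCast_pow_pred_ne_zero (q := q) (a := a) ?_
      linear_combination -hs1 + q * h

theorem exists_zero_prod_mem_core_of_odd (hq2 : q ≠ 2) (hst : ¬ X.SocleStable x) :
    ∃ k : ℕ, ((0, q ^ k * x.2) : ZMod (q ^ a) × B) ∈ X.core (RingHom.ker (RingHom.fst _ B)) := by
  obtain ⟨l, hl⟩ : ∃ l, (q : ZMod (q ^ a)) ^ l * x.1 = 0 :=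
    ⟨a, by rw [natCast_pow_eq_zero le_rfl, zero_mul]⟩
  induction l generalizing x with
  | zero => exact ⟨1, by simpa using zero_prod_mem_core (by simp_all) hst⟩
  | succ l ih =>
    by_cases hx : q * x.1 = 0
    · exact ⟨1, by simpa using zero_prod_mem_core hx hst⟩
    · obtain ⟨k, hk⟩ := ih (x := q • x) (mt (SocleStable.of_nsmul hq2 hx) hst) <| by
        simpa [← mul_assoc, ← pow_succ] using hl
      exact ⟨k + 1, by simpa [pow_succ, mul_assoc] using hk⟩

theorem exists_unit_mul_fst (h : X.r x y) (hx : q * x.1 ≠ 0) {t : ZMod (q ^ a)}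
    (hxt : ¬ X.r x (x + socle t)) (hyt : ¬ X.r x (y + socle t)) :
    ∃ k, IsUnit k ∧ y.1 = k * x.1 := by
  have hxy : ¬ q * x.1 ∣ y.1 := fun hdvd ↦ hxt (trans h (symm (add_socle_rel h hx hdvd t)))
  have hx1 : x.1 ≠ 0 := right_ne_zero_of_mul hx
  have hy1 : y.1 ≠ 0 := fun h0 ↦ hxy (h0 ▸ dvd_zero _)
  rcases natCast_mul_dvd_trichotomy hx1 hy1 with hdvd | hdvd | hunit
  · exact absurd hdvd hxy
  · have hy : q * y.1 ≠ 0 := fun h0 ↦ hx1 (zero_dvd_iff.1 (h0 ▸ hdvd))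
    exact absurd (symm (add_socle_rel (symm h) hy hdvd t)) hyt
  · exact hunit

end PrimePart

section TwoPart

variable {a : ℕ} {B : Type*} [CommRing B] {X : SchurRing (ZMod (2 ^ a) × B)}
  {x s s' : ZMod (2 ^ a) × B}

variable (X x) in
/-- The elements of the basic set of `x` whose translate by the involution leaves it. -/
def unpaired : Set (ZMod (2 ^ a) × B) := {s | X.r x s ∧ ¬ X.r x (s + socle 1)}

variable (x) in
/-- The reflection of the second coordinate in that of `x`. -/
def reflectSnd (s : ZMod (2 ^ a) × B) : ZMod (2 ^ a) × B := (s.1, 2 * x.2 - s.2)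

theorem reflectSnd_add_socle : reflectSnd x (s + socle 1) = reflectSnd x s + socle 1 := by
  ext <;> simp [reflectSnd, socle]

theorem reflectSnd_reflectSnd : reflectSnd x (reflectSnd x s) = s := by
  ext <;> simp [reflectSnd]

theorem two_mul_sub_eq_self_iff (hB : IsUnit (2 : B)) {v w : B} : 2 * v - w = w ↔ w = v := by
  rw [sub_eq_iff_eq_add, ← two_mul, hB.mul_right_inj, eq_comm]

theorem odd_ncard_image_snd [Finite B] (hB : IsUnit (2 : B)) (hx : x ∈ X.unpaired x) :
    Odd (Prod.snd '' {s ∈ X.unpaired x | reflectSnd x s ∈ X.unpaired x}).ncard := by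
  set T := {s ∈ X.unpaired x | reflectSnd x s ∈ X.unpaired x}
  have hmaps : MapsTo (fun w ↦ 2 * x.2 - w) (Prod.snd '' T) (Prod.snd '' T) := by
    rintro _ ⟨s, hs, rfl⟩
    exact ⟨reflectSnd x s, ⟨hs.2, by simpa [reflectSnd_reflectSnd] using hs.1⟩, rfl⟩
  have hfixed : {w ∈ Prod.snd '' T | 2 * x.2 - w = w} = {x.2} := by
    ext w
    simp only [two_mul_sub_eq_self_iff hB, Set.mem_ofPred_eq, Set.mem_singleton_iff,
      and_iff_right_iff_imp]
    rintro rfl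
    have hxx : reflectSnd x x = x := Prod.ext rfl ((two_mul_sub_eq_self_iff hB).2 rfl)
    exact ⟨x, ⟨hx, by rwa [hxx]⟩, rfl⟩
  have hmod := ncard_modEq_ncard_fixed (q := 2) (funext fun w ↦ by simp) hmaps
  rw [hfixed, Set.ncard_singleton] at hmod
  exact Nat.odd_iff.2 hmod

variable [NeZero a]

theorem isUnit_mul_two_pow_pred {k : ZMod (2 ^ a)} (hk : IsUnit k) :
    k * (2 : ZMod (2 ^ a)) ^ (a - 1) = 2 ^ (a - 1) := by
  exact mul_eq_self_of_natCast_dvd_sub_one (q := 2) (by simpa using two_dvd_sub_one hk)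
    (by simpa using natCast_mul_pow_pred (q := 2) (a := a))

theorem add_socle_add_socle (s : ZMod (2 ^ a) × B) : s + socle 1 + socle 1 = s := by
  rw [add_assoc, ← two_nsmul, nsmul_socle, add_zero]

theorem mk_one_mul_add_socle {k : ZMod (2 ^ a)} (hk : IsUnit k) (s : ZMod (2 ^ a) × B) :
    (k, 1) * (s + socle 1) = (k, 1) * s + socle 1 := by
  ext <;> simp [socle, mul_add, isUnit_mul_two_pow_pred hk]

variable [Finite B]

theorem even_ncard_image_snd :
    Even (Prod.snd '' {s ∈ X.unpaired x | reflectSnd x s + socle 1 ∈ X.unpaired x}).ncard := by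
  set T := {s ∈ X.unpaired x | reflectSnd x s + socle 1 ∈ X.unpaired x}
  have hmaps : MapsTo (fun w ↦ 2 * x.2 - w) (Prod.snd '' T) (Prod.snd '' T) := by
    rintro _ ⟨s, hs, rfl⟩
    refine ⟨reflectSnd x s + socle 1, ⟨hs.2, ?_⟩, by simp [reflectSnd, socle]⟩
    simpa [reflectSnd_add_socle, reflectSnd_reflectSnd, add_socle_add_socle] using hs.1
  have hfixed : {w ∈ Prod.snd '' T | 2 * x.2 - w = w} = ∅ := by
    refine Set.eq_empty_of_forall_notMem ?_
    rintro _ ⟨⟨s, hs, rfl⟩, hw⟩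
    have hss : reflectSnd x s = s := Prod.ext rfl hw
    exact hs.1.2 (by simpa [hss] using hs.2.1)
  have hmod := ncard_modEq_ncard_fixed (q := 2) (funext fun w ↦ by simp) hmaps
  rw [hfixed, Set.ncard_empty] at hmod
  exact Nat.even_iff.2 hmod

variable [IsAddCyclic (ZMod (2 ^ a) × B)]

theorem exists_unit_mul_fst_of_mem_unpaired (hx : x ∈ X.unpaired x) (h2x : 2 * x.1 ≠ 0)
    (hs : s ∈ X.unpaired x) (hs' : s' ∈ X.unpaired x) : ∃ k, IsUnit k ∧ s'.1 = k * s.1 := by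
  obtain ⟨k, hk, hks⟩ := exists_unit_mul_fst hs.1 (by simpa using h2x) hx.2 hs.2
  obtain ⟨l, hl, hls⟩ := exists_unit_mul_fst hs'.1 (by simpa using h2x) hx.2 hs'.2
  obtain ⟨k, rfl⟩ := hk
  exact ⟨l * ↑k⁻¹, hl.mul k⁻¹.isUnit, by rw [hks, hls, mul_assoc, k.inv_mul_cancel_left]⟩

/-- The units of the first coordinate whose multiplication permutes `X.unpaired x`. -/
def IsUnpairedMultiplier (X : SchurRing (ZMod (2 ^ a) × B)) (x : ZMod (2 ^ a) × B)
    (k : ZMod (2 ^ a)) : Prop :=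
  IsUnit k ∧ ∀ t, (k, 1) * t ∈ X.unpaired x ↔ t ∈ X.unpaired x

theorem exists_isUnpairedMultiplier (hx : x ∈ X.unpaired x) (h2x : 2 * x.1 ≠ 0)
    (hs : s ∈ X.unpaired x) (hs' : s' ∈ X.unpaired x) (h : s'.2 = s.2) :
    ∃ k, X.IsUnpairedMultiplier x k ∧ s' = (k, 1) * s := by
  obtain ⟨k, hk, hks⟩ := exists_unit_mul_fst_of_mem_unpaired hx h2x hs hs'
  have hs'k : s' = (k, 1) * s := Prod.ext hks (by simpa using h)
  have hrel (t : ZMod (2 ^ a) × B) : X.r x ((k, 1) * t) ↔ X.r x t := by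
    refine ⟨fun h ↦ trans hs.1 ?_, fun h ↦ trans hs'.1 ?_⟩
    · exact (unit_mul_iff (isUnit_mk_one hk)).1 (hs'k ▸ trans (symm hs'.1) h)
    · exact hs'k ▸ unit_mul (isUnit_mk_one hk) (trans (symm hs.1) h)
  refine ⟨k, ⟨hk, fun t ↦ ?_⟩, hs'k⟩
  simp only [unpaired, Set.mem_ofPred_eq, ← mk_one_mul_add_socle hk, hrel]

theorem ncard_unpaired_fibre_le (hx : x ∈ X.unpaired x) (h2x : 2 * x.1 ≠ 0)
    (hs : s ∈ X.unpaired x) (hs' : s' ∈ X.unpaired x) :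
    {t ∈ X.unpaired x | t.2 = s.2}.ncard ≤ {t ∈ X.unpaired x | t.2 = s'.2}.ncard := by
  obtain ⟨l, hl, hls⟩ := exists_unit_mul_fst_of_mem_unpaired hx h2x hs hs'
  refine Set.ncard_le_ncard_of_injOn (fun t ↦ (l * t.1, s'.2)) ?_ ?_
  · rintro t ⟨ht, hts⟩
    obtain ⟨k, hk, rfl⟩ := exists_isUnpairedMultiplier hx h2x hs ht hts
    refine ⟨?_, rfl⟩
    convert (hk.2 s').2 hs' using 1
    ext <;> simp [hls, mul_left_comm]
  · rintro t ⟨-, ht⟩ t' ⟨-, ht'⟩ htt'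
    exact Prod.ext (hl.mul_left_cancel (congrArg Prod.fst htt')) (ht.trans ht'.symm)

theorem ncard_unpaired_inter (hx : x ∈ X.unpaired x) (h2x : 2 * x.1 ≠ 0)
    {Q : Set (ZMod (2 ^ a) × B)}
    (hQ : ∀ k, X.IsUnpairedMultiplier x k → ∀ s ∈ Q, (k, 1) * s ∈ Q) :
    (X.unpaired x ∩ Q).ncard =
      (Prod.snd '' (X.unpaired x ∩ Q)).ncard * {t ∈ X.unpaired x | t.2 = x.2}.ncard := by
  refine ncard_eq_ncard_image_mul fun s hs ↦ ?_
  have hfibre : {t ∈ X.unpaired x ∩ Q | t.2 = s.2} = {t ∈ X.unpaired x | t.2 = s.2} := by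
    refine Set.Subset.antisymm (fun t ht ↦ ⟨ht.1.1, ht.2⟩) fun t ht ↦ ⟨⟨ht.1, ?_⟩, ht.2⟩
    obtain ⟨k, hk, rfl⟩ := exists_isUnpairedMultiplier hx h2x hs.1 ht.1 ht.2
    exact hQ k hk s hs.2
  rw [hfibre]
  exact (ncard_unpaired_fibre_le hx h2x hs.1 hx).antisymm (ncard_unpaired_fibre_le hx h2x hx hs.1)

theorem ncard_unpaired_reflectSnd (h : X.r (0, 2 * x.2) ((0, 2 * x.2) + socle 1)) :
    {s ∈ X.unpaired x | reflectSnd x s ∈ X.unpaired x}.ncard =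
      {s ∈ X.unpaired x | reflectSnd x s + socle 1 ∈ X.unpaired x}.ncard := by
  have hneg (w : ZMod (2 ^ a) × B) : X.r (-x.1, x.2) w ↔ X.r x (-w.1, w.2) := by
    have h1 : IsUnit ((-1, 1) : ZMod (2 ^ a) × B) := isUnit_mk_one isUnit_one.neg
    rw [← unit_mul_iff h1]
    simp [Prod.mul_def]
  have hsocle (s : ZMod (2 ^ a) × B) : reflectSnd x s - socle 1 = reflectSnd x s + socle 1 := by
    rw [sub_eq_iff_eq_add, add_socle_add_socle]
  have hsub (s : ZMod (2 ^ a) × B) :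
      (-((0, 2 * x.2) - s).1, ((0, 2 * x.2) - s).2) = reflectSnd x s := by
    ext <;> simp [reflectSnd]
  have hsub' (s : ZMod (2 ^ a) × B) :
      (-((0, 2 * x.2) + socle 1 - s).1, ((0, 2 * x.2) + socle 1 - s).2) =
        reflectSnd x s + socle 1 := by
    rw [← hsocle]
    ext <;> simp [reflectSnd, socle]
  refine ncard_isolated_inter_preimage (e := (· + socle 1)) (S := {s | X.r x s})
    add_socle_add_socle (fun s ↦ reflectSnd_add_socle) ?_
  have hcount := ncard_decompositions_eq h x (-x.1, x.2)
  simp only [hneg, hsub, hsub'] at hcount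
  exact hcount

theorem not_rel_zero_two_mul_add_socle (h2x : 2 * x.1 ≠ 0)
    (hx : ¬ X.r x (x + socle 1)) : ¬ X.r (0, 2 * x.2) ((0, 2 * x.2) + socle 1) := by
  intro hcon
  have hB : IsUnit (2 : B) := by simpa using isUnit_natCast_of_isAddCyclic_prod 2 a B
  have hxP : x ∈ X.unpaired x := ⟨refl x, hx⟩
  have hmul {k : ZMod (2 ^ a)} (s : ZMod (2 ^ a) × B) :
      reflectSnd x ((k, 1) * s) = (k, 1) * reflectSnd x s := by ext <;> simp [reflectSnd]
  have hcount₀ := ncard_unpaired_inter (Q := {s | reflectSnd x s ∈ X.unpaired x}) hxP h2x <| by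
    intro k hk s hs
    rwa [Set.mem_ofPred_eq, hmul, hk.2]
  have hcount₁ := ncard_unpaired_inter (Q := {s | reflectSnd x s + socle 1 ∈ X.unpaired x})
    hxP h2x <| by
    intro k hk s hs
    rwa [Set.mem_ofPred_eq, hmul, ← mk_one_mul_add_socle hk.1, hk.2]
  have hpos : 0 < {t ∈ X.unpaired x | t.2 = x.2}.ncard := (Set.ncard_pos).2 ⟨x, hxP, rfl⟩
  have hcard := Nat.eq_of_mul_eq_mul_right hpos <|
    (hcount₀.symm.trans (ncard_unpaired_reflectSnd hcon)).trans hcount₁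
  exact Nat.not_odd_iff_even.2 (hcard ▸ even_ncard_image_snd) (odd_ncard_image_snd hB hxP)

end TwoPart

section Saturated

variable {q a : ℕ} [Fact q.Prime] [NeZero a] {B : Type*} [CommRing B] [Finite B]
  [IsAddCyclic (ZMod (q ^ a) × B)] {X : SchurRing (ZMod (q ^ a) × B)}

theorem exists_zero_prod_mem_core {x : ZMod (q ^ a) × B} (hx : ¬ X.r x (x + socle 1)) :
    ∃ k : ℕ, ((0, q ^ k * x.2) : ZMod (q ^ a) × B) ∈ X.core (RingHom.ker (RingHom.fst _ B)) := by
  have hst : ¬ X.SocleStable x := fun h ↦ hx (h 1)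
  by_cases hq2 : q = 2
  · subst hq2
    by_cases h0 : (2 : ℕ) * x.1 = 0
    · exact ⟨1, by simpa using zero_prod_mem_core h0 hst⟩
    · have h := not_rel_zero_two_mul_add_socle (by simpa using h0) hx
      refine ⟨2, ?_⟩
      simpa [pow_two, mul_assoc] using zero_prod_mem_core (by simp) fun h' ↦ h (h' 1)
  · exact exists_zero_prod_mem_core_of_odd hq2 hst

/-- The ideal generated by the Sylow subgroup and the core of its complement would otherwise be
proper, and `IsNormal.exists_not_rel_add` contradicts its primality once enlarged to a maximal
ideal. -/
theorem IsNormal.saturated_fst_eq_zero (hX : X.IsNormal) : X.Saturated {x | x.1 = 0} := by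
  set C := X.core (RingHom.ker (RingHom.fst (ZMod (q ^ a)) B))
  have hq := isUnit_natCast_of_isAddCyclic_prod q a B
  suffices htop : C ⊔ Ideal.span {(1, 0)} = ⊤ by
    obtain ⟨c, hc, d, hd, hcd⟩ := Submodule.mem_sup.1 (htop ▸ Submodule.mem_top (x := 1))
    obtain ⟨e, rfl⟩ := Ideal.mem_span_singleton'.1 hd
    intro x y hxy hx
    suffices hxC : x ∈ C from hxC y hxy
    convert C.mul_mem_left x hc using 1
    have hc2 : c.2 = 1 := by simpa using congrArg Prod.snd hcd
    exact Prod.ext (by simp [show x.1 = 0 from hx]) (by simp [hc2])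
  by_contra hne
  obtain ⟨I, hI, hle⟩ := Ideal.exists_le_maximal _ hne
  have h10 : ((1, 0) : ZMod (q ^ a) × B) ∈ I := hle (Ideal.mem_sup_right (Ideal.subset_span rfl))
  have hfst (c : ZMod (q ^ a)) : ((c, 0) : ZMod (q ^ a) × B) ∈ I := by
    simpa using I.mul_mem_left (c, 0) h10
  have hqI : (q : ZMod (q ^ a) × B) ∉ I := fun h ↦ hI.ne_top <| I.eq_top_iff_one.2 <| by
    obtain ⟨u, hu⟩ := hq
    convert I.add_mem h10 (I.mul_mem_left (0, ↑u⁻¹) h) using 1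
    ext <;> simp [← hu]
  obtain ⟨x, hxI, hx⟩ := hX.exists_not_rel_add (e := socle 1) (I.ne_top_iff_one.1 hI.ne_top)
    (hfst _) socle_one_ne_zero fun h2 h2s ↦ by
      have hq2 : Nat.Coprime 2 q := (Nat.coprime_primes Nat.prime_two Fact.out).2 fun h ↦
        hqI (by simpa [← h] using h2)
      have hdvd : addOrderOf (socle 1 : ZMod (q ^ a) × B) ∣ Nat.gcd 2 q :=
        Nat.dvd_gcd (addOrderOf_dvd_of_nsmul_eq_zero (by simpa [two_mul, two_nsmul] using h2s))
          (addOrderOf_dvd_of_nsmul_eq_zero (nsmul_socle 1))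
      rw [hq2, Nat.dvd_one, AddMonoid.addOrderOf_eq_one_iff] at hdvd
      exact socle_one_ne_zero hdvd
  obtain ⟨k, hk⟩ := exists_zero_prod_mem_core hx
  have hqx : (q : ZMod (q ^ a) × B) ^ k * x ∈ I := by
    convert I.add_mem (hle (Ideal.mem_sup_left hk)) (hfst (q ^ k * x.1)) using 1
    ext <;> simp
  exact hxI ((hI.isPrime.mem_or_mem hqx).resolve_left fun h ↦ hqI (hI.isPrime.mem_of_pow_mem _ h))

end Saturated

/-! ### Point extensions and Sylow subgroups of odd order -/

/-- A coherent configuration that extends the Cayley scheme of `X` and has `{0}` as a fiber, encoded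
by the equivalence relation whose classes are its basis relations. As in `SchurRing`, permutations
stand in for the intersection numbers. -/
structure PointExtension {R : Type*} [AddCommGroup R] (X : SchurRing R)
    extends Setoid (R × R) where
  sub_rel : ∀ {x z x' z'}, r (x, z) (x', z') → X.r (z - x) (z' - x')
  swap : ∀ {x z x' z'}, r (x, z) (x', z') → r (z, x) (z', x')
  exists_perm : ∀ {x z x' z'}, r (x, z) (x', z') →
    ∃ σ : Equiv.Perm R, ∀ y, r (x, y) (x', σ y) ∧ r (y, z) (σ y, z')
  eq_zero : ∀ {x z}, r (0, 0) (x, z) → x = 0 ∧ z = 0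

section PointExtension

variable {R : Type*} [AddCommGroup R] {X : SchurRing R} {Y : X.PointExtension} {x z x' z' : R}

theorem PointExtension.exists_rel (h : Y.r (x, z) (x', z')) (y : R) :
    ∃ y', Y.r (x, y) (x', y') ∧ Y.r (y, z) (y', z') :=
  (Y.exists_perm h).elim fun σ hσ ↦ ⟨σ y, hσ y⟩

theorem PointExtension.rel_left (h : Y.r (x, z) (x', z')) : X.r x x' := by
  obtain ⟨y, hxy, hyz⟩ := Y.exists_rel h 0
  obtain rfl : y = 0 := by
    obtain ⟨v, hv, -⟩ := Y.exists_rel hyz 0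
    exact (Y.eq_zero hv).1
  simpa using Y.sub_rel (Y.swap hxy)

theorem PointExtension.rel_right (h : Y.r (x, z) (x', z')) : X.r z z' :=
  Y.rel_left (Y.swap h)

end PointExtension

section PrimePower

variable {q a : ℕ} {B : Type*} [CommRing B] {X : SchurRing (ZMod (q ^ a) × B)}
  {Y : X.PointExtension} {x z x' z' k l : ZMod (q ^ a)}

/-- The trace of the point extension on the Sylow subgroup. -/
def PointExtension.SylowRel (Y : X.PointExtension) (x z x' z' : ZMod (q ^ a)) : Prop :=
  Y.r ((x, 0), (z, 0)) ((x', 0), (z', 0))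

theorem exists_sylowRel (hL : X.Saturated {x | x.2 = 0}) (h : Y.SylowRel x z x' z')
    (y : ZMod (q ^ a)) : ∃ y', Y.SylowRel x y x' y' ∧ Y.SylowRel y z y' z' := by
  obtain ⟨⟨y', w⟩, h1, h2⟩ := Y.exists_rel h (y, 0)
  obtain rfl : w = 0 := hL (Y.rel_right h1) rfl
  exact ⟨y', h1, h2⟩

theorem exists_rel_rel (hK : X.Saturated {x | x.1 = 0}) (h : Y.SylowRel x z x' z') (w : B) :
    ∃ w', X.r (x, w) (x', w') ∧ X.r (z, w) (z', w') := by
  obtain ⟨⟨t, w'⟩, h1, h2⟩ := Y.exists_rel h (0, -w)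
  obtain rfl : t = 0 := hK (Y.rel_right h1) rfl
  exact ⟨-w', by simpa using Y.sub_rel (Y.swap h1), by simpa using Y.sub_rel h2⟩

variable [Finite B] [NeZero q] [IsAddCyclic (ZMod (q ^ a) × B)]

theorem exists_rel_rel_sub (hK : X.Saturated {x | x.1 = 0}) (h : Y.SylowRel x z x' z') (w : B) :
    ∃ w', X.r (x, w) (x', w') ∧ X.r (z - x, w) (z' - x', w') := by
  obtain ⟨⟨t, w'⟩, h1, h2⟩ := Y.exists_rel h (x, -w)
  obtain rfl : t = x' := sub_eq_zero.1 (hK (Y.sub_rel h1) (sub_self x))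
  refine ⟨-w', ?_, by simpa using Y.sub_rel h2⟩
  simpa using unit_mul (Prod.isUnit_iff.2 ⟨isUnit_one, isUnit_one.neg⟩ :
    IsUnit ((1, -1) : ZMod (q ^ a) × B)) (Y.rel_right h1)

variable (X k) in
/-- Multiplication by `(k, 1)` fixes every basic set that meets `(ZMod (q ^ a))ˣ × B`. -/
def IsFstMultiplier : Prop := IsUnit k ∧ ∀ w, X.r (1, w) (k, w)

theorem IsFstMultiplier.rel (hk : X.IsFstMultiplier k) {y : ZMod (q ^ a) × B} (hy : IsUnit y.1) :
    X.r y ((k, 1) * y) := by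
  simpa [Prod.mul_def, mul_comm] using unit_mul (isUnit_mk_one hy) (hk.2 y.2)

theorem IsFstMultiplier.mul (hk : X.IsFstMultiplier k) (hl : X.IsFstMultiplier l) :
    X.IsFstMultiplier (k * l) :=
  ⟨hk.1.mul hl.1, fun w ↦ by simpa using trans (hl.2 w) (hk.rel hl.1)⟩

theorem isFstMultiplier_of_rel {y z : ZMod (q ^ a)} (hy : IsUnit y) (hz : IsUnit z)
    (h : ∀ w, X.r (y, w) (z, w)) : ∃ k, X.IsFstMultiplier k ∧ z = k * y := by
  obtain ⟨v, rfl⟩ := hy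
  refine ⟨z * ↑v⁻¹, ⟨hz.mul v⁻¹.isUnit, fun w ↦ ?_⟩, by simp⟩
  simpa [mul_comm] using unit_mul (isUnit_mk_one v⁻¹.isUnit) (h w)

theorem IsFstMultiplier.inv {v : (ZMod (q ^ a))ˣ} (hv : X.IsFstMultiplier (v : ZMod (q ^ a))) :
    X.IsFstMultiplier (↑v⁻¹ : ZMod (q ^ a)) :=
  ⟨v⁻¹.isUnit, fun w ↦ by
    simpa using symm (hv.rel (y := (↑v⁻¹, w)) v⁻¹.isUnit)⟩

theorem isFstMultiplier_of_forall_rel (hx : IsUnit x) (hx' : IsUnit x') (hz : IsUnit z)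
    (hz' : IsUnit z') (h : ∀ w', ∃ w, X.r (x', w') (x, w) ∧ X.r (z', w') (z, w)) :
    ∃ k, X.IsFstMultiplier k ∧ z' * x = k * (z * x') := by
  refine isFstMultiplier_of_rel (hz.mul hx') (hz'.mul hx) fun w' ↦ ?_
  obtain ⟨w, hxw, hzw⟩ := h w'
  have h1 : X.r (z * x', w') (z * x, w) := by simpa using unit_mul (isUnit_mk_one hz) hxw
  have h2 : X.r (z' * x, w') (z * x, w) := by
    simpa [mul_comm] using unit_mul (isUnit_mk_one hx) hzw
  exact trans h1 (symm h2)

theorem isFstMultiplier_of_sylowRel (hK : X.Saturated {x | x.1 = 0})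
    (h : Y.SylowRel x z x' z') (hx : IsUnit x) (hx' : IsUnit x') (hz : IsUnit z)
    (hz' : IsUnit z') : ∃ k, X.IsFstMultiplier k ∧ z' * x = k * (z * x') :=
  isFstMultiplier_of_forall_rel hx hx' hz hz' (exists_rel_rel hK (Y.symm' h))

theorem isFstMultiplier_of_sylowRel_sub (hK : X.Saturated {x | x.1 = 0})
    (h : Y.SylowRel x z x' z') (hx : IsUnit x) (hx' : IsUnit x') (hz : IsUnit (z - x))
    (hz' : IsUnit (z' - x')) :
    ∃ k, X.IsFstMultiplier k ∧ (z' - x') * x = k * ((z - x) * x') :=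
  isFstMultiplier_of_forall_rel hx hx' hz hz' (exists_rel_rel_sub hK (Y.symm' h))

theorem saturated_dvd_fst (hK : X.Saturated {x | x.1 = 0}) {d : ZMod (q ^ a)}
    {x : ZMod (q ^ a) × B} (hx : ∀ y, X.r x y → d ∣ y.1) (hxd : x.1 ∣ d) :
    X.Saturated {y | d ∣ y.1} := by
  set C := X.core ((Ideal.span {d}).comap (RingHom.fst (ZMod (q ^ a)) B))
  have hxC : x ∈ C := fun y hy ↦ by simpa [Ideal.mem_span_singleton] using hx y hy
  have hzero (w : B) : (0, w) ∈ C := fun y hy ↦ by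
    have hy1 : y.1 = 0 := hK hy rfl
    simp [hy1]
  rintro y z hyz ⟨c, hc⟩
  obtain ⟨b, rfl⟩ := hxd
  have hyC : y ∈ C := by
    convert C.add_mem (C.mul_mem_left (b * c, 0) hxC) (hzero y.2) using 1
    ext <;> simp [hc]
    ring
  simpa [Ideal.mem_span_singleton] using hyC z hyz

end PrimePower

section NotSocleStable

variable {q a : ℕ} [Fact q.Prime] [NeZero a] {B : Type*} [CommRing B]
  {X : SchurRing (ZMod (q ^ a) × B)} {x y : ZMod (q ^ a) × B}

theorem isUnit_fst_of_rel (hq : X.Saturated {x | (q : ZMod (q ^ a)) ∣ x.1}) (h : X.r x y)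
    (hx : IsUnit x.1) : IsUnit y.1 := by
  rw [isUnit_iff_not_natCast_dvd] at hx ⊢
  exact fun hy ↦ hx (hq (symm h) hy)

variable [Finite B] [IsAddCyclic (ZMod (q ^ a) × B)]

theorem saturated_natCast_dvd (hK : X.Saturated {x | x.1 = 0}) (hx : IsUnit x.1)
    (hst : ¬ X.SocleStable x) : X.Saturated {y | (q : ZMod (q ^ a)) ∣ y.1} := by
  refine saturated_dvd_fst (x := q • x) hK (fun y hy ↦ ?_) (by simp [hx.mul_right_dvd])
  obtain ⟨s, -, rfl⟩ := exists_rel_nsmul_eq hy (not_dvd_rootCount_of_not_socleStable hst)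
  simp

theorem IsFstMultiplier.eq_one (hx : IsUnit x.1) (hst : ¬ X.SocleStable x) {k : ZMod (q ^ a)}
    (hk : X.IsFstMultiplier k) (hk1 : 2 * (q : ZMod (q ^ a)) ∣ k - 1) : k = 1 := by
  by_contra hne
  exact hst <| socleStable_of_mul_rel hk1 (hk.rel hx) fun h ↦
    hne (hx.mul_right_cancel (h.trans (one_mul _).symm))

end NotSocleStable

section OddPrime

variable {q a : ℕ} [Fact q.Prime] {B : Type*} [CommRing B] [Finite B]
  {X : SchurRing (ZMod (q ^ a) × B)} {Y : X.PointExtension} {z z' : ZMod (q ^ a)}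

theorem IsNormal.exists_not_socleStable [NeZero a] (hX : X.IsNormal) (hq2 : q ≠ 2) (ha : 2 ≤ a) :
    ∃ x, IsUnit x.1 ∧ ¬ X.SocleStable x := by
  set I := (Ideal.span {(q : ZMod (q ^ a))}).comap (RingHom.fst (ZMod (q ^ a)) B)
  have hI (x : ZMod (q ^ a) × B) : x ∈ I ↔ ¬ IsUnit x.1 := by
    simp [I, isUnit_iff_not_natCast_dvd, Ideal.mem_span_singleton]
  obtain ⟨x, hx, hst⟩ := hX.exists_not_rel_add (I := I) (e := socle 1) (by simp [hI])
    (by simp [I, socle, Ideal.mem_span_singleton, dvd_pow_self _ (Nat.sub_ne_zero_of_lt ha)])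
    socle_one_ne_zero fun h2 ↦ absurd (isUnit_two_of_ne_two hq2) (by simpa using (hI 2).1 h2)
  exact ⟨x, by simpa [hI] using hx, fun h ↦ hst (h 1)⟩

variable [IsAddCyclic (ZMod (q ^ a) × B)]

theorem eq_of_natCast_dvd_sub_one (hK : X.Saturated {x | x.1 = 0})
    (hq : X.Saturated {x | (q : ZMod (q ^ a)) ∣ x.1})
    (hk : ∀ k, X.IsFstMultiplier k → (q : ZMod (q ^ a)) ∣ k - 1 → k = 1)
    (h : Y.SylowRel 1 z 1 z') (hz : (q : ZMod (q ^ a)) ∣ z - 1) : z' = z := by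
  have hz' : (q : ZMod (q ^ a)) ∣ z' - 1 := by simpa using hq (Y.sub_rel h) (by simpa using hz)
  have hzu := isUnit_of_natCast_dvd_sub_one hz
  obtain ⟨k, hkX, hkz⟩ := isFstMultiplier_of_sylowRel hK h isUnit_one isUnit_one hzu
    (isUnit_of_natCast_dvd_sub_one hz')
  rw [mul_one, mul_one] at hkz
  have hk1 : (q : ZMod (q ^ a)) ∣ (k - 1) * z := by
    convert dvd_sub hz' hz using 1
    rw [hkz]; ring
  rw [hkz, hk k hkX (hzu.dvd_mul_right.1 hk1), one_mul]

variable [NeZero a]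

theorem eq_of_isUnit_sub_one (ha : 2 ≤ a) (hK : X.Saturated {x | x.1 = 0})
    (hL : X.Saturated {x | x.2 = 0}) (hq : X.Saturated {x | (q : ZMod (q ^ a)) ∣ x.1})
    (hk : ∀ k, X.IsFstMultiplier k → (q : ZMod (q ^ a)) ∣ k - 1 → k = 1)
    (h : Y.SylowRel 1 z 1 z') (hz : IsUnit (z - 1)) : z' = z := by
  have hz' : IsUnit (z' - 1) := by
    simpa using isUnit_fst_of_rel hq (Y.sub_rel h) (by simpa using hz)
  have hshift (e : ZMod (q ^ a)) (he : (q : ZMod (q ^ a)) ∣ e) :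
      ∃ c, X.IsFstMultiplier c ∧ z' - 1 - e = c * (z - 1 - e) := by
    obtain ⟨y, hy, hyz⟩ := exists_sylowRel hL h (1 + e)
    obtain rfl := eq_of_natCast_dvd_sub_one hK hq hk hy (by simpa using he)
    have hue := isUnit_of_natCast_dvd_sub_one (by simpa using he : (q : ZMod (q ^ a)) ∣ 1 + e - 1)
    have hsub {t : ZMod (q ^ a)} (ht : IsUnit (t - 1)) : IsUnit (t - (1 + e)) := by
      rw [isUnit_iff_not_natCast_dvd] at ht ⊢
      exact fun h ↦ ht (by convert dvd_add h he using 1; ring)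
    obtain ⟨k, hkX, hkz⟩ := isFstMultiplier_of_sylowRel_sub hK hyz hue hue (hsub hz) (hsub hz')
    refine ⟨k, hkX, hue.mul_right_cancel ?_⟩
    linear_combination hkz
  obtain ⟨c, hc, hc0⟩ := hshift 0 (dvd_zero _)
  obtain ⟨d, hd, hdq⟩ := hshift q dvd_rfl
  obtain ⟨v, rfl⟩ := hc.1
  have hdv : (q : ZMod (q ^ a)) ∣ d * ↑v⁻¹ - 1 := by
    have h1 : (q : ZMod (q ^ a)) ∣ (d * ↑v⁻¹ - 1) * (v * (z - 1)) :=
      ⟨d - 1, by linear_combination hc0 - hdq + d * (z - 1) * v.inv_mul⟩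
    exact (v.isUnit.mul hz).dvd_mul_right.1 h1
  obtain rfl : d = v := by
    simpa [Units.mul_inv_eq_one] using hk _ (hd.mul hc.inv) hdv
  obtain ⟨j, -, hj⟩ := exists_eq_natCast_pow_pred_mul (t := (v : ZMod (q ^ a)) - 1)
    (by linear_combination hdq - hc0)
  have hv1 := hk v hc (hj ▸ (dvd_pow_self _ (Nat.sub_ne_zero_of_lt ha)).mul_right _)
  rw [hv1] at hc0
  linear_combination hc0

theorem IsNormal.eq_of_sylowRel_of_odd (hX : X.IsNormal) (hL : X.Saturated {x | x.2 = 0})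
    (hq2 : q ≠ 2) (ha : 2 ≤ a) (h : Y.SylowRel 1 z 1 z') : z' = z := by
  have hK := hX.saturated_fst_eq_zero
  obtain ⟨x, hx, hst⟩ := hX.exists_not_socleStable hq2 ha
  have hq := saturated_natCast_dvd hK hx hst
  have hk (k) (hkX : X.IsFstMultiplier k) (hk1 : (q : ZMod (q ^ a)) ∣ k - 1) : k = 1 :=
    hkX.eq_one hx hst ((isUnit_two_of_ne_two hq2).mul_left_dvd.2 hk1)
  by_cases hz : (q : ZMod (q ^ a)) ∣ z - 1
  · exact eq_of_natCast_dvd_sub_one hK hq hk h hz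
  · exact eq_of_isUnit_sub_one ha hK hL hq hk h (isUnit_iff_not_natCast_dvd.2 hz)

end OddPrime

/-! ### Sylow subgroups of even order -/

section Decompositions

variable {R : Type*} [AddCommGroup R] {X : SchurRing R} {S : Set R} {x s t : R}

theorem Saturated.exists_rel_sub_mem (hS : X.Saturated S) (h : X.r t s) (ht : t - x ∈ S) :
    ∃ y, X.r x y ∧ s - y ∈ S :=
  (X.exists_perm h).elim fun σ hσ ↦ ⟨σ x, (hσ x).1, hS (hσ x).2 ht⟩

theorem Saturated.ncard_sub_mem_le [Finite R] (hS : X.Saturated S) (h : X.r x s) :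
    {z | X.r x z ∧ x - z ∈ S}.ncard ≤ {z | X.r x z ∧ s - z ∈ S}.ncard := by
  obtain ⟨σ, hσ⟩ := X.exists_perm h
  exact Set.ncard_le_ncard_of_injOn σ
    (fun z hz ↦ ⟨trans hz.1 (hσ z).1, hS (hσ z).2 hz.2⟩) σ.injective.injOn

end Decompositions

theorem ncard_rel_sub_eq {R : Type*} [CommRing R] [Finite R] [IsAddCyclic R] {X : SchurRing R}
    {x e e' : R} (h : X.r e e') :
    {t | X.r x t ∧ X.r x (t - e)}.ncard = {t | X.r x t ∧ X.r x (t - e')}.ncard := by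
  have hneg (t e : R) : X.r x (t - e) ↔ X.r (-x) (e - t) :=
    ⟨fun h ↦ by simpa using neg_rel h, fun h ↦ by simpa using neg_rel h⟩
  simp only [hneg]
  exact ncard_decompositions_eq h x (-x)

section SocleStableUnits

variable {a : ℕ} {B : Type*} [CommRing B] {X : SchurRing (ZMod (2 ^ a) × B)}
  {x s s' h : ZMod (2 ^ a) × B} {y k c : ZMod (2 ^ a)}

variable (X) in
/-- The basic sets of the elements with unit first coordinate are unions of cosets of the
subgroup of order two. -/
def UnitsSocleStable : Prop := ∀ x, IsUnit x.1 → X.SocleStable x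

theorem four_dvd_socle (ha : 3 ≤ a) (t : ZMod (2 ^ a)) :
    4 ∣ (socle t : ZMod (2 ^ a) × B).1 := by
  have h4 : (4 : ZMod (2 ^ a)) ∣ 2 ^ (a - 1) := by
    convert pow_dvd_pow (2 : ZMod (2 ^ a)) (by omega : 2 ≤ a - 1) using 1
    norm_num
  simpa [socle] using h4.mul_right t

theorem exists_rel_socle_rel_sub (hE : X.UnitsSocleStable) (hxs : X.r x s) (hs : IsUnit s.1) :
    ∃ h, X.r (socle 1) h ∧ X.r x (x - h) := by
  obtain ⟨σ, hσ⟩ := X.exists_perm (symm hxs)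
  obtain ⟨h1, h2⟩ := hσ (socle 1)
  refine ⟨_, h1, trans hxs (trans ?_ h2)⟩
  convert hE s hs (-1) using 1
  ext <;> simp [socle]; ring

theorem mul_rel_of_rel [Finite B] [IsAddCyclic (ZMod (2 ^ a) × B)] (hk : IsUnit k)
    (h : X.r x ((k, 1) * x)) (hxs : X.r x s) : X.r s ((k, 1) * s) :=
  trans (symm hxs) (trans h (unit_mul (isUnit_mk_one hk) hxs))

variable [NeZero a]

theorem socleStable_of_rel_sub_socle (h : X.r x (x - socle 1)) : X.SocleStable x := by
  intro t
  rcases eq_zero_or_eq_two_pow_pred_of_two_mul_eq_zero (t := 2 ^ (a - 1) * -t)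
    (by rw [← mul_assoc]; simpa using congrArg (· * -t) (natCast_mul_pow_pred (q := 2) (a := a)))
    with ht | ht
  · convert refl x using 1
    ext
    · simp only [socle, Prod.fst_add, Nat.cast_ofNat]
      linear_combination -ht
    · simp [socle]
  · convert h using 1
    ext
    · simp only [socle, Prod.fst_add, Prod.fst_sub, Nat.cast_ofNat]
      linear_combination -ht
    · simp [socle]

variable [Finite B]

theorem IsNormal.exists_not_socleStable_two_mul (hX : X.IsNormal) (ha : 3 ≤ a)
    (hE : X.UnitsSocleStable) : ∃ y w, IsUnit y ∧ ¬ X.SocleStable (2 * y, w) := by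
  have h42 : ¬ (4 : ZMod (2 ^ a)) ∣ 2 := not_four_dvd_two (by omega)
  set I := (Ideal.span {(4 : ZMod (2 ^ a))}).comap (RingHom.fst (ZMod (2 ^ a)) B)
  have hI (x : ZMod (2 ^ a) × B) : x ∈ I ↔ 4 ∣ x.1 := by simp [I, Ideal.mem_span_singleton]
  obtain ⟨x, hx, hst⟩ := hX.exists_not_rel_add (I := I) (e := socle 1)
    (fun h ↦ h42 (((hI _).1 h).trans (one_dvd 2))) ((hI _).2 (four_dvd_socle ha 1))
    socle_one_ne_zero fun h ↦ absurd ((hI _).1 h) h42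
  obtain ⟨y, hy⟩ := by_contra fun h2 ↦ hst (hE x (isUnit_iff_not_two_dvd.2 h2) 1)
  rw [hI, hy, four_dvd_two_mul_iff (by omega)] at hx
  exact ⟨y, x.2, isUnit_iff_not_two_dvd.2 hx, fun h ↦ hst (by convert h 1)⟩

theorem ncard_even_le (hD4 : X.Saturated {x | 4 ∣ x.1}) (ha : 2 ≤ a) (hy : IsUnit y)
    (hx : x.1 = 2 * y) (hxs : X.r x s) :
    {t | X.r x t ∧ 2 ∣ t.1}.ncard ≤ {t | X.r x t ∧ 4 ∣ s.1 - t.1}.ncard := by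
  refine le_trans (Set.ncard_le_ncard ?_) (hD4.ncard_sub_mem_le hxs)
  rintro t ⟨hxt, c, hc⟩
  have hcu : IsUnit c := by
    refine isUnit_iff_not_two_dvd.2 fun h ↦ isUnit_iff_not_two_dvd.1 hy ?_
    rw [← four_dvd_two_mul_iff ha] at h ⊢
    exact hx ▸ hD4 (symm hxt) (by simpa [hc] using h)
  refine ⟨hxt, ?_⟩
  rw [Set.mem_ofPred_eq, Prod.fst_sub, hx, hc, ← mul_sub, four_dvd_two_mul_iff ha]
  exact two_dvd_sub hy hcu

theorem two_mul_ncard_even_le (hD4 : X.Saturated {x | 4 ∣ x.1}) (ha : 2 ≤ a)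
    (hE : X.UnitsSocleStable) (hy : IsUnit y) (hx : x.1 = 2 * y) (hs : IsUnit s.1)
    (hs' : IsUnit s'.1) (hss : ¬ 4 ∣ s.1 - s'.1) (hxs : X.r x s) (hxs' : X.r x s') :
    2 * {t | X.r x t ∧ 2 ∣ t.1}.ncard ≤ {t | X.r x t ∧ X.r x (t - socle 1)}.ncard := by
  have hsub {u : ZMod (2 ^ a) × B} (hu : IsUnit u.1) :
      {t | X.r x t ∧ 4 ∣ u.1 - t.1} ⊆ {t | X.r x t ∧ X.r x (t - socle 1)} := by
    refine fun t ⟨hxt, ht⟩ ↦ ⟨hxt, trans hxt ?_⟩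
    have htu : IsUnit t.1 := isUnit_of_two_dvd_sub hu <|
      dvd_trans ⟨2, by norm_num⟩ (dvd_sub_comm.1 ht)
    convert hE t htu (-1) using 1
    ext <;> simp [socle]; ring
  have hdisj : Disjoint {t | X.r x t ∧ 4 ∣ s.1 - t.1} {t | X.r x t ∧ 4 ∣ s'.1 - t.1} :=
    Set.disjoint_left.2 fun t ⟨_, h1⟩ ⟨_, h2⟩ ↦ hss <| by simpa using dvd_sub h1 h2
  calc 2 * {t | X.r x t ∧ 2 ∣ t.1}.ncard
      ≤ {t | X.r x t ∧ 4 ∣ s.1 - t.1}.ncard + {t | X.r x t ∧ 4 ∣ s'.1 - t.1}.ncard := by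
        rw [two_mul]
        exact add_le_add (ncard_even_le hD4 ha hy hx hxs) (ncard_even_le hD4 ha hy hx hxs')
    _ = ({t | X.r x t ∧ 4 ∣ s.1 - t.1} ∪ {t | X.r x t ∧ 4 ∣ s'.1 - t.1}).ncard :=
        (Set.ncard_union_eq hdisj).symm
    _ ≤ _ := Set.ncard_le_ncard (Set.union_subset (hsub hs) (hsub hs'))

variable [IsAddCyclic (ZMod (2 ^ a) × B)]

theorem IsNormal.saturated_four_dvd (hX : X.IsNormal) (ha : 3 ≤ a) (hE : X.UnitsSocleStable) :
    X.Saturated {x | 4 ∣ x.1} := by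
  obtain ⟨y, w, hy, hst⟩ := hX.exists_not_socleStable_two_mul ha hE
  refine saturated_dvd_fst (q := 2) (x := 2 • (2 * y, w)) hX.saturated_fst_eq_zero
    (fun z hz ↦ ?_) ⟨↑hy.unit⁻¹, ?_⟩
  · have hroot := not_dvd_rootCount_of_not_socleStable hst
    rw [(X.rootCount_modEq _ hz).dvd_iff dvd_rfl] at hroot
    by_contra hz4
    refine hroot (dvd_ncard_of_add_mem socle_one_ne_zero (nsmul_socle 1) ?_)
    rintro s ⟨hs, rfl⟩
    have hsu : IsUnit s.1 := by
      rw [isUnit_iff_not_two_dvd]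
      exact fun h2 ↦ hz4 (by simpa using (four_dvd_two_mul_iff (by omega)).2 h2)
    exact ⟨trans hs (hE s hsu 1), by rw [smul_add, nsmul_socle, add_zero]⟩
  · have := hy.mul_val_inv
    simp only [nsmul_eq_mul, Nat.cast_ofNat, Prod.fst_mul, Prod.fst_ofNat]
    linear_combination -4 * this

theorem four_mul_mul_eq_zero (hst : ¬ X.SocleStable x) (hxs : X.r x s) (hh : h = (4 * c * s.1, 0))
    (hsh : X.r x (s - h)) : 4 * c * x.1 = 0 := by
  have hku : IsUnit (1 - 4 * c) := isUnit_of_two_dvd_sub isUnit_one ⟨-2 * c, by ring⟩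
  have hks : X.r s ((1 - 4 * c, 1) * s) := by
    convert trans (symm hxs) hsh using 1
    ext <;> simp [hh]; ring
  by_contra hne
  refine hst <| socleStable_of_mul_rel (k := 1 - 4 * c) ⟨-c, by push_cast; ring⟩
    (mul_rel_of_rel hku hks (symm hxs)) fun h ↦ hne ?_
  linear_combination -h

theorem rel_sub_subset_even (hst : ¬ X.SocleStable x) (hy : IsUnit y) (hx : x.1 = 2 * y)
    (hh : h = (4 * c, 0)) (h2 : 2 * h.1 ≠ 0) :
    {t | X.r x t ∧ X.r x (t - h)} ⊆ {t | X.r x t ∧ 2 ∣ t.1} := by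
  refine fun t ⟨hxt, hth⟩ ↦ ⟨hxt, by_contra fun ht ↦ h2 ?_⟩
  obtain ⟨v, hv⟩ := isUnit_iff_not_two_dvd.2 ht
  have h8 := four_mul_mul_eq_zero (c := c * ((v⁻¹ : (ZMod (2 ^ a))ˣ) : ZMod (2 ^ a))) hst hxt
    (by rw [hh, ← hv, mul_assoc, mul_assoc, v.inv_mul, mul_one]) hth
  refine hy.mul_left_cancel (v⁻¹.isUnit.mul_left_cancel ?_)
  rw [hx] at h8
  simp only [hh]
  linear_combination h8

theorem exists_four_dvd_add_one (hst : ¬ X.SocleStable x) (hy : IsUnit y) (hx : x.1 = 2 * y)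
    (hh : h = (4 * c, 0)) (h0 : h ≠ 0) (hxh : X.r x (x - h)) :
    ∃ k, IsUnit k ∧ 4 ∣ k + 1 ∧ X.r x ((k, 1) * x) := by
  obtain ⟨v, rfl⟩ := hy
  set k : ZMod (2 ^ a) := 1 - 2 * (c * ↑v⁻¹) with hkdef
  have hku : IsUnit k := isUnit_of_two_dvd_sub isUnit_one ⟨-(c * ↑v⁻¹), by rw [hkdef]; ring⟩
  have hkx : k * x.1 = x.1 - 4 * c := by
    rw [hx, hkdef]
    linear_combination (-4 * c) * v.inv_mul
  have hrel : X.r x ((k, 1) * x) := by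
    convert hxh using 1
    ext <;> simp [hh, hkx]
  refine ⟨k, hku, (four_dvd_sub_one_or_add_one hku).resolve_left fun hk4 ↦ hst ?_, hrel⟩
  refine socleStable_of_mul_rel (k := k) (by convert hk4; norm_num) hrel fun h4 ↦ h0 ?_
  rw [hh, Prod.mk_eq_zero]
  exact ⟨by linear_combination hkx - h4, rfl⟩

theorem IsNormal.not_isUnit_of_rel (hX : X.IsNormal) (hL : X.Saturated {x | x.2 = 0})
    (ha : 3 ≤ a) (hE : X.UnitsSocleStable) (hst : ¬ X.SocleStable x) (hy : IsUnit y)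
    (hx : x.1 = 2 * y) (hxs : X.r x s) : ¬ IsUnit s.1 := by
  intro hs
  have hD4 := hX.saturated_four_dvd ha hE
  obtain ⟨h, hsoc, hxh⟩ := exists_rel_socle_rel_sub hE hxs hs
  have hh2 : h.2 = 0 := hL hsoc rfl
  obtain ⟨c, hc⟩ : 4 ∣ h.1 := hD4 hsoc (four_dvd_socle ha 1)
  have hh : h = (4 * c, 0) := Prod.ext hc hh2
  have h0 : h ≠ 0 := by
    rintro rfl
    exact socle_one_ne_zero (X.eq_zero (symm hsoc))
  have h2 : 2 * h.1 ≠ 0 := fun h2 ↦ (eq_zero_or_eq_two_pow_pred_of_two_mul_eq_zero h2).elim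
    (fun h1 ↦ h0 (Prod.ext h1 hh2)) fun h1 ↦ hst <| socleStable_of_rel_sub_socle <| by
      convert hxh
      exact (Prod.ext (by simp [h1, socle]) (by simp [hh2, socle]))
  obtain ⟨k, hk, hk1, hkx⟩ := exists_four_dvd_add_one hst hy hx hh h0 hxh
  have hks : IsUnit ((k, 1) * s).1 := by simpa using hk.mul hs
  have hss : ¬ 4 ∣ s.1 - ((k, 1) * s).1 := fun h4 ↦ not_four_dvd_two (a := a) (by omega) <| by
    have hk1' : 4 ∣ (1 - k) * s.1 := by
      convert h4 using 1
      rw [Prod.fst_mul]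
      ring
    convert dvd_add hk1 (hs.dvd_mul_right.1 hk1') using 1
    ring
  have hle : 2 * {t | X.r x t ∧ 2 ∣ t.1}.ncard ≤ {t | X.r x t ∧ 2 ∣ t.1}.ncard :=
    (two_mul_ncard_even_le hD4 (by omega) hE hy hx hs hks hss hxs
      (trans hxs (mul_rel_of_rel hk hkx hxs))).trans <|
      (ncard_rel_sub_eq hsoc).le.trans <|
        Set.ncard_le_ncard (rel_sub_subset_even hst hy hx hh h2)
  have hpos : 0 < {t | X.r x t ∧ 2 ∣ t.1}.ncard :=
    (Set.ncard_pos).2 ⟨x, refl x, y, hx⟩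
  omega

theorem IsNormal.saturated_two_dvd_of_unitsSocleStable (hX : X.IsNormal)
    (hL : X.Saturated {x | x.2 = 0}) (ha : 3 ≤ a) (hE : X.UnitsSocleStable) :
    X.Saturated {x | 2 ∣ x.1} := by
  have hD4 := hX.saturated_four_dvd ha hE
  obtain ⟨y, w, hy, hst⟩ := hX.exists_not_socleStable_two_mul ha hE
  rintro t s hts ⟨c, hc⟩
  by_contra hs
  have hcu : IsUnit c := isUnit_iff_not_two_dvd.2 fun h ↦ hs <|
    dvd_trans ⟨2, by norm_num⟩ <| hD4 hts <| by
      rwa [Set.mem_ofPred_eq, hc, four_dvd_two_mul_iff (by omega)]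
  obtain ⟨u, hu, d, hd⟩ := hD4.exists_rel_sub_mem (x := (2 * y, w)) hts <| by
    rw [Set.mem_ofPred_eq, Prod.fst_sub, hc, ← mul_sub, four_dvd_two_mul_iff (by omega)]
    exact two_dvd_sub hcu hy
  refine hX.not_isUnit_of_rel hL ha hE hst hy rfl hu <|
    isUnit_of_two_dvd_sub (isUnit_iff_not_two_dvd.2 hs) ⟨-(2 * d), ?_⟩
  rw [Prod.fst_sub] at hd
  linear_combination -hd

end SocleStableUnits

section Product

variable {n : ℕ} {A B : Type*} [CommRing A] [CommRing B]

theorem exists_rel_fst_sub {X : SchurRing (A × B)} (hL : X.Saturated {x | x.2 = 0}) {x y : A × B}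
    (h : X.r x y) (t : A) :
    ∃ s, X.r (t, 0) (s, 0) ∧ X.r (x.1 - t, x.2) (y.1 - s, y.2) := by
  obtain ⟨⟨s, w⟩, h1, h2⟩ : ∃ z, X.r (t, 0) z ∧ X.r (x - (t, 0)) (y - z) :=
    (X.exists_perm h).elim fun σ hσ ↦ ⟨_, hσ (t, 0)⟩
  obtain rfl : w = 0 := hL h1 rfl
  exact ⟨s, h1, by convert h2 using 1 <;> ext <;> simp⟩

theorem exists_rel_mk {X : SchurRing (A × B)} (hK : X.Saturated {x | x.1 = 0}) {x y : A × B}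
    (h : X.r x y) (w : B) : ∃ w', X.r (x.1, w) (y.1, w') := by
  obtain ⟨⟨t, v⟩, h1, h2⟩ : ∃ z, X.r (0, x.2 - w) z ∧ X.r (x - (0, x.2 - w)) (y - z) :=
    (X.exists_perm h).elim fun σ hσ ↦ ⟨_, hσ (0, x.2 - w)⟩
  obtain rfl : t = 0 := hK h1 rfl
  exact ⟨y.2 - v, by convert h2 using 1 <;> ext <;> simp⟩

theorem fst_ne_zero_of_rel {X : SchurRing (A × B)} (hK : X.Saturated {x | x.1 = 0}) {x y : A × B}
    (h : X.r x y) (hx : x.1 ≠ 0) : y.1 ≠ 0 :=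
  fun hy ↦ hx (hK (symm h) hy)

theorem IsNormal.not_forall_rel {X : SchurRing (ZMod n × B)} (hX : X.IsNormal) {c d : ZMod n}
    (hcd : c ≠ d) (hc0 : c ≠ 0) (hd0 : d ≠ 0) (hc1 : c ≠ 1) (hd1 : d ≠ 1) :
    ¬ ∀ t, t ≠ 0 → ∀ w, X.r (1, w) (t, w) := by
  intro h
  set σ := Equiv.swap c d
  have hσ0 : σ 0 = 0 := Equiv.swap_apply_of_ne_of_ne hc0.symm hd0.symm
  have hσ1 : σ 1 = 1 := Equiv.swap_apply_of_ne_of_ne hc1.symm hd1.symm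
  have hadd := hX (Prod.map σ id) (σ.bijective.prodMap Function.bijective_id) (fun x y ↦ ?_)
    (Prod.ext hσ0 rfl)
  · let f : ZMod n →+ ZMod n :=
      AddMonoidHom.mk' σ fun s t ↦ by simpa using congrArg Prod.fst (hadd (s, 0) (t, 0))
    obtain ⟨m, hm⟩ := ZMod.intCast_surjective c
    have hfc : f c = c := by
      rw [← hm, ← zsmul_one, map_zsmul]
      exact congrArg (m • ·) hσ1
    exact hcd (hfc.symm.trans (Equiv.swap_apply_left c d))
  · by_cases hxy : y.1 = x.1
    · convert refl (X := X) (y - x) using 1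
      ext <;> simp [hxy]
    · exact trans (symm (h _ (sub_ne_zero.2 hxy) _))
        (h _ (sub_ne_zero.2 (σ.injective.ne hxy)) _)

end Product

section ModFour

variable {B : Type*} [CommRing B] {X : SchurRing (ZMod (2 ^ 2) × B)}

theorem one_rel_two_of_rel (hK : X.Saturated {x | x.1 = 0}) (hL : X.Saturated {x | x.2 = 0})
    (hE : ∀ w, X.r (1, w) (3, w)) {v v' : B} (h : X.r (1, v) (2, v')) (w : B) :
    X.r (1, w) (2, w) := by
  obtain ⟨w', hw'⟩ := exists_rel_mk hK h w
  have hww' : X.r (1, w) (1, w') := by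
    obtain ⟨s, h2s, hs⟩ : ∃ s, X.r (2, 0) (s, 0) ∧ X.r (3, w) (2 - s, w') :=
      exists_rel_fst_sub hL hw' 2
    have hs0 : s ≠ 0 :=
      fst_ne_zero_of_rel hK h2s (by decide : (2 : ZMod (2 ^ 2)) ≠ 0)
    have hs2 : 2 - s ≠ 0 :=
      fst_ne_zero_of_rel hK hs (by decide : (3 : ZMod (2 ^ 2)) ≠ 0)
    have hcases : 2 - s = 1 ∨ 2 - s = 3 := by
      clear h2s hs
      decide +revert
    have h3 : X.r (1, w) (2 - s, w') := trans (hE w) hs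
    rcases hcases with h1 | h1 <;> rw [h1] at h3
    exacts [h3, trans h3 (symm (hE w'))]
  obtain ⟨s, h3s, hs⟩ : ∃ s, X.r (3, 0) (s, 0) ∧ X.r (2, w) (1 - s, w') :=
    exists_rel_fst_sub hL hww' 3
  have hs0 : s ≠ 0 :=
      fst_ne_zero_of_rel hK h3s (by decide : (3 : ZMod (2 ^ 2)) ≠ 0)
  have hs1 : 1 - s ≠ 0 :=
      fst_ne_zero_of_rel hK hs (by decide : (2 : ZMod (2 ^ 2)) ≠ 0)
  have hcases : 1 - s = 2 ∨ 1 - s = 3 := by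
    clear h3s hs
    decide +revert
  rcases hcases with h1 | h1 <;> rw [h1] at hs
  exacts [trans hw' (symm hs), trans hww' (trans (hE w') (symm hs))]

theorem IsNormal.saturated_two_dvd_of_one_rel_three (hX : X.IsNormal)
    (hK : X.Saturated {x | x.1 = 0}) (hL : X.Saturated {x | x.2 = 0})
    (hE : ∀ w, X.r (1, w) (3, w)) : X.Saturated {x | 2 ∣ x.1} := by
  rintro ⟨t, v⟩ ⟨s, v'⟩ h (ht : 2 ∣ t)
  by_contra (hs : ¬ 2 ∣ s)
  have ht0 : t ≠ 0 :=
    fst_ne_zero_of_rel hK (symm h) fun hs0 : s = 0 ↦ hs (hs0 ▸ dvd_zero _)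
  obtain rfl : t = 2 := by
    clear h
    decide +revert
  have h12 : X.r (1, v') (2, v) := by
    obtain rfl | rfl : s = 1 ∨ s = 3 := by
      clear h
      decide +revert
    exacts [symm h, trans (hE v') (symm h)]
  refine hX.not_forall_rel (c := 2) (d := 3) (by decide) (by decide) (by decide) (by decide)
    (by decide) fun t ht w ↦ ?_
  obtain rfl | rfl | rfl : t = 1 ∨ t = 2 ∨ t = 3 := by decide +revert
  exacts [refl _, one_rel_two_of_rel hK hL hE h12 w, hE w]

end ModFour

section TwoPower

variable {a : ℕ} [NeZero a] {B : Type*} [CommRing B] {X : SchurRing (ZMod (2 ^ a) × B)}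
  {Y : X.PointExtension} {z z' : ZMod (2 ^ a)}

theorem four_dvd_sub_of_exists_rel (ha : 2 ≤ a) {w : B}
    (hw : ∀ d x, X.r (d, w) x → 4 ∣ x.1 → 4 ∣ d) {d d' : ZMod (2 ^ a)} (hd : 2 ∣ d)
    (hd' : 2 ∣ d') (h : ∃ w', X.r (d, w) (d', w')) (h' : ∃ w', X.r (d', w) (d, w')) :
    4 ∣ d' - d := by
  obtain ⟨e, rfl⟩ := hd
  obtain ⟨e', rfl⟩ := hd'
  obtain ⟨w₁, h⟩ := h
  obtain ⟨w₂, h'⟩ := h'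
  have hiff : 2 ∣ e ↔ 2 ∣ e' := by
    simp only [← four_dvd_two_mul_iff ha]
    exact ⟨hw _ _ h', hw _ _ h⟩
  rw [← mul_sub, four_dvd_two_mul_iff ha]
  by_cases he : 2 ∣ e
  · exact dvd_sub (hiff.1 he) he
  · exact two_dvd_sub (isUnit_iff_not_two_dvd.2 fun h2 ↦ he (hiff.2 h2))
      (isUnit_iff_not_two_dvd.2 he)

variable [Finite B] [IsAddCyclic (ZMod (2 ^ a) × B)]

theorem IsNormal.saturated_two_dvd (hX : X.IsNormal) (hL : X.Saturated {x | x.2 = 0})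
    (ha : 2 ≤ a) : X.Saturated {x | 2 ∣ x.1} := by
  by_cases hE : X.UnitsSocleStable
  · obtain rfl | ha3 := ha.eq_or_lt
    · refine hX.saturated_two_dvd_of_one_rel_three hX.saturated_fst_eq_zero hL fun w ↦ ?_
      convert hE (1, w) isUnit_one 1 using 1
      ext
      · simp only [socle, Prod.fst_add]
        decide
      · simp [socle]
    · exact hX.saturated_two_dvd_of_unitsSocleStable hL ha3 hE
  · obtain ⟨x, hx, hst⟩ : ∃ x, IsUnit x.1 ∧ ¬ X.SocleStable x := by
      simpa [UnitsSocleStable] using hE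
    simpa using saturated_natCast_dvd hX.saturated_fst_eq_zero hx hst

theorem IsNormal.exists_forall_rel_four_dvd (hX : X.IsNormal) (hL : X.Saturated {x | x.2 = 0})
    (ha : 3 ≤ a) : ∃ w, ∀ d x, X.r (d, w) x → 4 ∣ x.1 → 4 ∣ d := by
  by_cases hE : X.UnitsSocleStable
  · exact ⟨0, fun d x h hx ↦ hX.saturated_four_dvd ha hE (symm h) hx⟩
  obtain ⟨s, hs, hst⟩ : ∃ x, IsUnit x.1 ∧ ¬ X.SocleStable x := by
    simpa [UnitsSocleStable] using hE
  have h2 := hX.saturated_two_dvd hL (by omega)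
  refine ⟨2 * s.2, fun d x h hx ↦ ?_⟩
  obtain ⟨u, rfl⟩ : 2 ∣ d := h2 (symm h) (dvd_trans ⟨2, by norm_num⟩ hx)
  rw [four_dvd_two_mul_iff (by omega)]
  by_contra hu
  obtain ⟨v, rfl⟩ := isUnit_iff_not_two_dvd.2 hu
  have hrel : X.r (2 • s) ((s.1 * ↑v⁻¹, 1) * x) := by
    convert unit_mul (isUnit_mk_one (hs.mul v⁻¹.isUnit)) h using 1
    ext
    · simp only [Prod.fst_ofNat, nsmul_eq_mul, Nat.cast_ofNat, Prod.fst_mul]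
      linear_combination (-2 * s.1) * v.inv_mul
    · simp
  obtain ⟨s', hss', hs'⟩ := exists_rel_nsmul_eq hrel (not_dvd_rootCount_of_not_socleStable hst)
  refine isUnit_iff_not_two_dvd.1 hs (h2 (symm hss') ?_)
  have h4 : 2 * s'.1 = s.1 * ↑v⁻¹ * x.1 := by simpa using congrArg Prod.fst hs'
  exact (four_dvd_two_mul_iff (by omega)).1 (h4 ▸ hx.mul_left _)

theorem IsFstMultiplier.two_mul_sub_one_eq_zero (hX : X.IsNormal) (ha : 3 ≤ a)
    {k : ZMod (2 ^ a)} (hk : X.IsFstMultiplier k) (hk4 : 4 ∣ k - 1) : 2 * (k - 1) = 0 := by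
  by_contra hne
  have hk4' : 2 * ((2 : ℕ) : ZMod (2 ^ a)) ∣ k - 1 := by
    convert hk4
    norm_num
  have hmove {u : ZMod (2 ^ a)} (hu : IsUnit u) : k * (2 * u) ≠ 2 * u := fun h ↦
    hne (hu.mul_right_cancel (by linear_combination h))
  have hpow : (2 : ZMod (2 ^ a)) ^ (a - 1) = 2 * 2 ^ (a - 2) := by
    rw [← pow_succ']
    congr 1
    omega
  set I := (Ideal.span {(2 : ZMod (2 ^ a))}).comap (RingHom.fst (ZMod (2 ^ a)) B)
  have hI (x : ZMod (2 ^ a) × B) : x ∈ I ↔ ¬ IsUnit x.1 := by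
    simp [I, isUnit_iff_not_two_dvd, Ideal.mem_span_singleton]
  have hne2 : (2 : ZMod (2 ^ a) × B) * (2 ^ (a - 2), 0) ≠ 0 := fun h ↦
    two_pow_pred_ne_zero (hpow.trans (by simpa using congrArg Prod.fst h))
  obtain ⟨x, hx, hnr⟩ := hX.exists_not_rel_add (I := I) (e := (2 ^ (a - 2), 0)) (by simp [hI])
    (by simp [I, Ideal.mem_span_singleton, dvd_pow_self _ (by omega : a - 2 ≠ 0)])
    (fun h ↦ hne2 (by rw [h, mul_zero])) fun _ ↦ hne2
  rw [hI, not_not] at hx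
  have hrel (N : ℕ) : k ^ N * x.1 ≠ x.1 + 2 ^ (a - 2) := fun h ↦ hnr <| by
    convert pow_mul_rel hk.1 (hk.rel hx) N using 1
    ext <;> simp [h]
  obtain ⟨N, hN⟩ := exists_pow_mul_eq_add_pow_pred hk4' (hmove hx) 1
  rw [Nat.cast_ofNat, mul_one] at hN
  obtain h0 | h0 := eq_zero_or_eq_two_pow_pred_of_two_mul_eq_zero
    (t := k ^ N * x.1 - x.1 - 2 ^ (a - 2)) (by linear_combination hN + hpow)
  · exact hrel N (by linear_combination h0)
  · obtain ⟨M, hM⟩ := exists_pow_mul_eq_add_pow_pred hk4' (y := k ^ N * x.1)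
      (fun h ↦ hmove ((hk.1.pow N).mul hx) (by linear_combination 2 * h)) (-1)
    rw [Nat.cast_ofNat] at hM
    exact hrel (M + N) (by rw [pow_add]; linear_combination hM + h0)

theorem IsNormal.two_mul_sub_eq_zero_of_exists_isFstMultiplier (hX : X.IsNormal) (ha : 3 ≤ a)
    {u : ZMod (2 ^ a)} (hu : IsUnit u) (h4 : 4 ∣ z' - z)
    (hk : ∃ k, X.IsFstMultiplier k ∧ z' - z = (k - 1) * u) : 2 * (z' - z) = 0 := by
  obtain ⟨k, hk, hkz⟩ := hk
  have hk4 : 4 ∣ k - 1 := hu.dvd_mul_right.1 (hkz ▸ h4)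
  rw [hkz, ← mul_assoc, hk.two_mul_sub_one_eq_zero hX ha hk4, zero_mul]

theorem IsNormal.two_mul_sub_eq_zero_of_sylowRel (hX : X.IsNormal)
    (hL : X.Saturated {x | x.2 = 0}) (ha : 2 ≤ a) (h : Y.SylowRel 1 z 1 z') :
    2 * (z' - z) = 0 := by
  have hK := hX.saturated_fst_eq_zero
  have h2 := hX.saturated_two_dvd hL ha
  have hzz' : 2 ∣ z ↔ 2 ∣ z' := h2.mem_iff (Y.rel_right h)
  obtain rfl | ha3 := ha.eq_or_lt
  · clear h
    decide +revert
  obtain ⟨w, hw⟩ := hX.exists_forall_rel_four_dvd hL ha3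
  have hodd {t : ZMod (2 ^ a)} (ht : 2 ∣ t) : IsUnit (t - 1) :=
    isUnit_of_two_dvd_sub isUnit_one.neg (by simpa using ht)
  by_cases hz : 2 ∣ z
  · have hz' := hzz'.1 hz
    refine hX.two_mul_sub_eq_zero_of_exists_isFstMultiplier ha3 (hodd hz)
      (four_dvd_sub_of_exists_rel ha hw hz hz' ?_ ?_) ?_
    · exact (exists_rel_rel hK h w).imp fun _ ↦ And.right
    · exact (exists_rel_rel hK (Y.symm' h) w).imp fun _ ↦ And.right
    · obtain ⟨k, hk, hkz⟩ := isFstMultiplier_of_sylowRel_sub hK h isUnit_one isUnit_one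
        (hodd hz) (hodd hz')
      exact ⟨k, hk, by linear_combination hkz⟩
  · have hzu := isUnit_iff_not_two_dvd.2 hz
    have hzu' := isUnit_iff_not_two_dvd.2 (mt hzz'.2 hz)
    refine hX.two_mul_sub_eq_zero_of_exists_isFstMultiplier ha3 hzu ?_ ?_
    · have h4 := four_dvd_sub_of_exists_rel ha hw (two_dvd_sub_one hzu) (two_dvd_sub_one hzu')
        ((exists_rel_rel_sub hK h w).imp fun _ ↦ And.right)
        ((exists_rel_rel_sub hK (Y.symm' h) w).imp fun _ ↦ And.right)
      simpa using h4
    · obtain ⟨k, hk, hkz⟩ := isFstMultiplier_of_sylowRel hK h isUnit_one isUnit_one hzu hzu'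
      exact ⟨k, hk, by linear_combination hkz⟩

end TwoPower

end SchurRing

/-! ### Sylow subgroups of prime order -/

section FiniteField

open Polynomial

variable {F : Type*} [Field F]

/-- The coefficientwise product of two polynomials. -/
noncomputable def hadamard (f g : F[X]) : F[X] :=
  ∑ i ∈ f.support, monomial i (f.coeff i * g.coeff i)

theorem coeff_hadamard (f g : F[X]) (i : ℕ) :
    (hadamard f g).coeff i = f.coeff i * g.coeff i := by
  simp only [hadamard, finsetSum_coeff, coeff_monomial, Finset.sum_ite_eq', mem_support_iff]
  split_ifs with h
  · rfl
  · rw [notMem_support_iff.1 h, zero_mul]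

theorem natDegree_hadamard_le (f g : F[X]) : (hadamard f g).natDegree ≤ f.natDegree :=
  natDegree_le_iff_coeff_eq_zero.2 fun i hi ↦ by
    rw [coeff_hadamard, coeff_eq_zero_of_natDegree_lt hi, zero_mul]

/-- The polynomials whose value at a ratio `z / x` depends only on the `p`-class of `(x, z)`. -/
def ratioInvariants (p : Fˣ → Fˣ → Fˣ → Fˣ → Prop) : Subalgebra F F[X] where
  carrier := {f | ∀ x z x' z', p x z x' z' → f.eval (z / x : F) = f.eval (z' / x' : F)}
  mul_mem' hf hg _ _ _ _ h := by rw [eval_mul, eval_mul, hf _ _ _ _ h, hg _ _ _ _ h]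
  add_mem' hf hg _ _ _ _ h := by rw [eval_add, eval_add, hf _ _ _ _ h, hg _ _ _ _ h]
  algebraMap_mem' c _ _ _ _ _ := by simp [algebraMap_eq]

variable [Fintype F]

theorem sum_pow_mul_div_pow [DecidableEq F] {i j : ℕ} (hi : i < Fintype.card F - 1)
    (hj : j ≤ Fintype.card F - 1) (t : Fˣ) :
    ∑ y : Fˣ, (y : F) ^ i * (t / y : F) ^ j =
      (if i = j then -(t : F) ^ i else 0) +
        if i = 0 ∧ j = Fintype.card F - 1 then -1 else 0 := by
  have hy (y : Fˣ) : (y : F) ^ i * (t / y : F) ^ j =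
      (t : F) ^ j * (y : F) ^ (i + (Fintype.card F - 1 - j)) := by
    have h1 : (y : F) ^ (Fintype.card F - 1 - j) * (y : F) ^ j = 1 := by
      rw [← pow_add, Nat.sub_add_cancel hj, FiniteField.pow_card_sub_one_eq_one _ y.ne_zero]
    rw [div_pow, mul_div_assoc', div_eq_iff (pow_ne_zero _ y.ne_zero), pow_add]
    linear_combination -(t : F) ^ j * (y : F) ^ i * h1
  simp only [hy, ← Finset.mul_sum, FiniteField.sum_pow_units]
  have hdvd : Fintype.card F - 1 ∣ i + (Fintype.card F - 1 - j) ↔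
      i = j ∨ i = 0 ∧ j = Fintype.card F - 1 := by
    refine ⟨fun ⟨c, hc⟩ ↦ ?_, ?_⟩
    · have hc2 : c < 2 := by
        by_contra! h2
        have := Nat.mul_le_mul_left (Fintype.card F - 1) h2
        omega
      interval_cases c <;> omega
    · rintro (rfl | ⟨rfl, rfl⟩)
      · simp [Nat.add_sub_cancel' hj]
      · simp
  simp only [hdvd]
  by_cases hij : i = j
  · subst hij
    simp [hi.ne]
  by_cases hij' : i = 0 ∧ j = Fintype.card F - 1
  · obtain ⟨rfl, rfl⟩ := hij'
    have ht := FiniteField.pow_card_sub_one_eq_one (t : F) t.ne_zero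
    simp [hi.ne, ht]
  · simp [hij, hij']

theorem sum_eval_mul_eval_div [DecidableEq F] {f g : F[X]} (hf : f.natDegree < Fintype.card F - 1)
    (hg : g.natDegree ≤ Fintype.card F - 1) (t : Fˣ) :
    ∑ y : Fˣ, f.eval (y : F) * g.eval (t / y : F) =
      -(hadamard f g).eval (t : F) - f.coeff 0 * g.coeff (Fintype.card F - 1) := by
  have hterm (i : ℕ) (hi : i ∈ Finset.range (Fintype.card F - 1)) :
      ∑ j ∈ Finset.range (Fintype.card F - 1 + 1),
        f.coeff i * g.coeff j * ∑ y : Fˣ, (y : F) ^ i * (t / y : F) ^ j =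
      -(f.coeff i * g.coeff i * (t : F) ^ i) -
        if i = 0 then f.coeff 0 * g.coeff (Fintype.card F - 1) else 0 := by
    rw [Finset.mem_range] at hi
    rw [Finset.sum_congr rfl fun j hj ↦ by
      rw [sum_pow_mul_div_pow hi (Nat.lt_succ_iff.1 (Finset.mem_range.1 hj)) t]]
    simp only [mul_add, mul_ite, mul_zero, Finset.sum_add_distrib, Finset.sum_ite_eq, ite_and]
    by_cases h0 : i = 0
    · subst h0
      simp [Finset.sum_ite_eq', sub_eq_add_neg]
    · simp [h0, hi.trans (Nat.lt_succ_self _)]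
  have hh := (natDegree_hadamard_le f g).trans_lt hf
  calc ∑ y : Fˣ, f.eval (y : F) * g.eval (t / y : F)
      = ∑ i ∈ Finset.range (Fintype.card F - 1), ∑ j ∈ Finset.range (Fintype.card F - 1 + 1),
          f.coeff i * g.coeff j * ∑ y : Fˣ, (y : F) ^ i * (t / y : F) ^ j := by
        simp only [eval_eq_sum_range' hf, eval_eq_sum_range' (Nat.lt_succ_of_le hg),
          Finset.sum_mul_sum]
        rw [Finset.sum_comm]
        refine Finset.sum_congr rfl fun i _ ↦ ?_
        rw [Finset.sum_comm]
        refine Finset.sum_congr rfl fun j _ ↦ ?_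
        rw [Finset.mul_sum]
        exact Finset.sum_congr rfl fun y _ ↦ by ring
    _ = _ := by
        rw [Finset.sum_congr rfl hterm, Finset.sum_sub_distrib, Finset.sum_neg_distrib,
          Finset.sum_ite_eq', if_pos (Finset.mem_range.2 (by omega)), eval_eq_sum_range' hh]
        simp only [coeff_hadamard]

variable {p : Fˣ → Fˣ → Fˣ → Fˣ → Prop}

theorem hadamard_mem_ratioInvariants
    (hp : ∀ x z x' z', p x z x' z' →
      ∃ σ : Equiv.Perm Fˣ, ∀ y, p x y x' (σ y) ∧ p y z (σ y) z')
    {f g : F[X]} (hf : f ∈ ratioInvariants p) (hg : g ∈ ratioInvariants p)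
    (hfd : f.natDegree < Fintype.card F - 1) (hgd : g.natDegree ≤ Fintype.card F - 1) :
    hadamard f g ∈ ratioInvariants p := by
  classical
  intro x z x' z' h
  have hsum (x z : Fˣ) : ∑ y : Fˣ, f.eval (y / x : F) * g.eval (z / y : F) =
      -(hadamard f g).eval (z / x : F) - f.coeff 0 * g.coeff (Fintype.card F - 1) := by
    rw [← Units.val_div_eq_div_val, ← sum_eval_mul_eval_div hfd hgd,
      ← Equiv.sum_comp (Equiv.mulRight x)]
    simp [div_div, mul_comm]
  obtain ⟨σ, hσ⟩ := hp _ _ _ _ h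
  have heq : ∑ y : Fˣ, f.eval (y / x : F) * g.eval (z / y : F) =
      ∑ y : Fˣ, f.eval (y / x' : F) * g.eval (z' / y : F) := by
    rw [← Equiv.sum_comp σ fun y : Fˣ ↦ f.eval (y / x' : F) * g.eval (z' / y : F)]
    exact Finset.sum_congr rfl fun y _ ↦ by rw [hf _ _ _ _ (hσ y).1, hg _ _ _ _ (hσ y).2]
  simpa only [hsum, sub_left_inj, neg_inj] using heq

end FiniteField

section PrimeField

open Polynomial

variable {p : ℕ} [Fact p.Prime] {S : Subalgebra (ZMod p) (ZMod p)[X]} {k : ℕ}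

theorem coeff_one_sub_X_pow_ne_zero (hk : k < p) {i : ℕ} (hi : i ≤ k) :
    ((1 - X) ^ k : (ZMod p)[X]).coeff i ≠ 0 := by
  have hp : p.Prime := Fact.out
  have hcoeff : ((1 - X) ^ k : (ZMod p)[X]).coeff i = k.choose i * (-1) ^ i := by
    rw [← coeff_one_add_X_pow, ← comp_C_mul_X_coeff]
    simp [sub_eq_add_neg]
  rw [hcoeff]
  refine mul_ne_zero (fun h ↦ ?_) (by simp)
  rw [ZMod.natCast_eq_zero_iff] at h
  exact hk.not_ge <| hp.dvd_factorial.1 <|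
    Nat.choose_mul_factorial_mul_factorial hi ▸ (h.mul_right _).mul_right _

theorem natDegree_one_sub_X_pow (k : ℕ) : ((1 - X) ^ k : (ZMod p)[X]).natDegree = k := by
  rw [natDegree_pow, ← neg_sub, natDegree_neg, ← C_1, natDegree_X_sub_C, mul_one]

theorem exists_mem_natDegree_le_X_pow_dvd_sub
    (hS : ∀ f ∈ S, ∀ g ∈ S, f.natDegree < p - 1 → g.natDegree ≤ p - 1 → hadamard f g ∈ S)
    (hk : k < p - 1) (hkS : (1 - X) ^ k ∈ S) {g : (ZMod p)[X]} (hg : g ∈ S)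
    (hgd : g.natDegree ≤ p - 1) : ∃ g' ∈ S, g'.natDegree ≤ k ∧ X ^ (k + 1) ∣ g' - g := by
  set f : (ZMod p)[X] := (1 - X) ^ k
  have hfd : f.natDegree = k := natDegree_one_sub_X_pow k
  have hiter (n : ℕ) : ∃ g' ∈ S, g'.natDegree ≤ p - 1 ∧
      ∀ i, g'.coeff i = f.coeff i ^ n * g.coeff i := by
    induction n with
    | zero => exact ⟨g, hg, hgd, by simp⟩
    | succ n ih =>
      obtain ⟨g', hg', hg'd, hcoeff⟩ := ih
      refine ⟨hadamard f g', hS f hkS g' hg' (by omega) hg'd,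
        (natDegree_hadamard_le _ _).trans (by omega), fun i ↦ ?_⟩
      rw [coeff_hadamard, hcoeff, pow_succ']
      ring
  obtain ⟨g', hg', -, hcoeff⟩ := hiter (p - 1)
  refine ⟨g', hg', natDegree_le_iff_coeff_eq_zero.2 fun i hi ↦ ?_, X_pow_dvd_iff.2 fun i hi ↦ ?_⟩
  · rw [hcoeff, coeff_eq_zero_of_natDegree_lt (hfd ▸ hi), zero_pow (by omega), zero_mul]
  · rw [coeff_sub, hcoeff, ZMod.pow_card_sub_one_eq_one
      (coeff_one_sub_X_pow_ne_zero (by omega) (Nat.lt_succ_iff.1 hi)), one_mul, sub_self]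

theorem one_sub_X_mem
    (hS : ∀ f ∈ S, ∀ g ∈ S, f.natDegree < p - 1 → g.natDegree ≤ p - 1 → hadamard f g ∈ S)
    (hk : 0 < k) (hkp : 2 * k ≤ p - 1) (hkS : (1 - X) ^ k ∈ S) : 1 - X ∈ S := by
  have hpow (n : ℕ) : ∃ g ∈ S, g.natDegree ≤ k ∧ X ^ (k + 1) ∣ g - ((1 - X) ^ k) ^ n := by
    induction n with
    | zero => exact ⟨1, S.one_mem, by simp, by simp⟩
    | succ n ih =>
      obtain ⟨g, hg, hgd, hdvd⟩ := ih
      obtain ⟨g', hg', hgd', hdvd'⟩ := exists_mem_natDegree_le_X_pow_dvd_sub hS (by omega) hkS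
        (S.mul_mem hg hkS) (natDegree_mul_le.trans (by rw [natDegree_one_sub_X_pow]; omega))
      refine ⟨g', hg', hgd', ?_⟩
      have := dvd_add hdvd' (hdvd.mul_right ((1 - X) ^ k))
      rwa [sub_mul, sub_add_sub_cancel, ← pow_succ] at this
  obtain ⟨n, -, hn⟩ := Nat.exists_mul_mod_eq_one_of_coprime (k := p) (n := k)
    (Nat.coprime_of_lt_prime hk.ne' (by omega) Fact.out).symm (Nat.Prime.one_lt Fact.out)
  obtain ⟨g, hg, hgd, hdvd⟩ := hpow n
  have hfrob : X ^ (k + 1) ∣ ((1 - X : (ZMod p)[X]) ^ k) ^ n - (1 - X) := by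
    rw [← pow_mul, ← Nat.mod_add_div (k * n) p, hn, pow_add (1 - X), pow_one, pow_mul, sub_pow_char,
      one_pow, ← mul_sub_one]
    have hXp : X ^ (k + 1) ∣ (X ^ p : (ZMod p)[X]) := pow_dvd_pow X (by omega)
    refine hXp.trans <| Dvd.dvd.mul_left ?_ _
    have hdvd := sub_dvd_pow_sub_pow (1 - X ^ p : (ZMod p)[X]) 1 (k * n / p)
    rwa [sub_sub_cancel_left, neg_dvd, one_pow] at hdvd
  have hdeg : (g - (1 - X)).natDegree < (X ^ (k + 1) : (ZMod p)[X]).natDegree := by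
    have h1 : (1 - X : (ZMod p)[X]).natDegree = 1 := by simpa using natDegree_one_sub_X_pow 1
    refine (natDegree_sub_le _ _).trans_lt ?_
    rw [natDegree_X_pow, h1]
    omega
  have h0 := eq_zero_of_dvd_of_natDegree_lt (by simpa using dvd_add hdvd hfrob) hdeg
  rwa [← sub_eq_zero.1 h0]

end PrimeField

namespace SchurRing

section FstMultipliers

variable {q a : ℕ} {B : Type*} [CommRing B]

theorem exists_perm_sylowRel [NeZero q] {X : SchurRing (ZMod (q ^ a) × B)} {Y : X.PointExtension}
    {x z x' z' : ZMod (q ^ a)} (hL : X.Saturated {x | x.2 = 0}) (h : Y.SylowRel x z x' z') :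
    ∃ σ : Equiv.Perm (ZMod (q ^ a)), ∀ y, Y.SylowRel x y x' (σ y) ∧ Y.SylowRel y z (σ y) z' := by
  obtain ⟨σ, hσ⟩ := Y.exists_perm h
  have hσ2 (y : ZMod (q ^ a)) : (σ (y, 0)).2 = 0 := hL (Y.rel_right (hσ (y, 0)).1) rfl
  have hinj : Function.Injective fun y : ZMod (q ^ a) ↦ (σ (y, 0)).1 := fun y t hyt ↦
    congrArg Prod.fst (σ.injective (Prod.ext hyt ((hσ2 y).trans (hσ2 t).symm)))
  refine ⟨Equiv.ofBijective _ (Finite.injective_iff_bijective.1 hinj), fun y ↦ ?_⟩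
  have hy := hσ (y, 0)
  rwa [← Prod.mk.eta (p := σ (y, 0)), hσ2] at hy

variable [Finite B] [Fact q.Prime] [IsAddCyclic (ZMod (q ^ a) × B)]

/-- The units `k` such that multiplication by `(k, 1)` fixes every basic set that meets
`(ZMod (q ^ a))ˣ × B`. -/
def fstMultipliers [NeZero a] (X : SchurRing (ZMod (q ^ a) × B)) : Subgroup (ZMod (q ^ a))ˣ where
  carrier := {u | X.IsFstMultiplier (u : ZMod (q ^ a))}
  one_mem' := ⟨isUnit_one, fun _ ↦ X.refl _⟩
  mul_mem' hu hv := by simpa using IsFstMultiplier.mul hu hv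
  inv_mem' hu := IsFstMultiplier.inv hu

end FstMultipliers

section PrimeOrder

variable {q : ℕ} [Fact q.Prime] {B : Type*} [CommRing B] {X : SchurRing (ZMod (q ^ 1) × B)}
  {Y : X.PointExtension}

instance : Fact (q ^ 1).Prime := ⟨by simpa using Fact.out⟩

theorem exists_perm_units_sylowRel (hL : X.Saturated {x | x.2 = 0}) {x z x' z' : (ZMod (q ^ 1))ˣ}
    (h : Y.SylowRel (x : ZMod (q ^ 1)) z x' z') :
    ∃ σ : Equiv.Perm (ZMod (q ^ 1))ˣ, ∀ y : (ZMod (q ^ 1))ˣ,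
      Y.SylowRel (x : ZMod (q ^ 1)) y x' (σ y) ∧ Y.SylowRel (y : ZMod (q ^ 1)) z (σ y) z' := by
  obtain ⟨σ, hσ⟩ := exists_perm_sylowRel hL h
  have hσ0 (y : (ZMod (q ^ 1))ˣ) : σ y ≠ 0 := fun h0 ↦ by
    have hy := Y.rel_right (hσ y).1
    rw [h0] at hy
    exact y.ne_zero (congrArg Prod.fst (X.eq_zero (X.symm hy)))
  have hinj : Function.Injective fun y : (ZMod (q ^ 1))ˣ ↦ Units.mk0 (σ y) (hσ0 y) :=
    fun y t hyt ↦ Units.ext (σ.injective (by simpa using hyt))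
  exact ⟨Equiv.ofBijective _ (Finite.injective_iff_bijective.1 hinj), fun y ↦ hσ y⟩

variable [Finite B] [IsAddCyclic (ZMod (q ^ 1) × B)]

theorem IsNormal.two_mul_card_fstMultipliers_le (hX : X.IsNormal) {c d : ZMod (q ^ 1)}
    (hcd : c ≠ d) (hc0 : c ≠ 0) (hd0 : d ≠ 0) (hc1 : c ≠ 1) (hd1 : d ≠ 1) :
    2 * Nat.card X.fstMultipliers ≤ q ^ 1 - 1 := by
  have htop : X.fstMultipliers ≠ ⊤ := fun htop ↦
    hX.not_forall_rel hcd hc0 hd0 hc1 hd1 fun t ht w ↦ by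
      have ht : Units.mk0 t ht ∈ X.fstMultipliers := htop ▸ Subgroup.mem_top _
      exact ht.2 w
  have hindex := X.fstMultipliers.one_lt_index_of_ne_top htop
  have hcard := X.fstMultipliers.card_mul_index
  rw [Nat.card_eq_fintype_card (α := (ZMod (q ^ 1))ˣ), ZMod.card_units] at hcard
  rw [← hcard, mul_comm]
  exact Nat.mul_le_mul_left _ hindex

open Polynomial in
theorem one_sub_X_pow_card_mem_ratioInvariants (hK : X.Saturated {x | x.1 = 0}) :
    (1 - Polynomial.X) ^ Nat.card X.fstMultipliers ∈ ratioInvariants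
      fun x z x' z' : (ZMod (q ^ 1))ˣ ↦ Y.SylowRel (x : ZMod (q ^ 1)) z x' z' := by
  intro x z x' z' h
  have hzx : (z - x : ZMod (q ^ 1)) = 0 ↔ (z' - x' : ZMod (q ^ 1)) = 0 :=
    hK.mem_iff (Y.sub_rel h)
  simp only [eval_pow, eval_sub, eval_one, eval_X, one_sub_div x.ne_zero, one_sub_div x'.ne_zero]
  by_cases h0 : (z - x : ZMod (q ^ 1)) = 0
  · rw [← neg_sub, ← neg_sub (z' : ZMod (q ^ 1)), h0, hzx.1 h0, neg_zero, zero_div, zero_div]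
  obtain ⟨m, hm, hmz⟩ := isFstMultiplier_of_sylowRel_sub hK h x.isUnit x'.isUnit
    (Ne.isUnit h0) (Ne.isUnit (mt hzx.2 h0))
  have hm1 : m ^ Nat.card X.fstMultipliers = 1 := by
    exact congrArg (fun u : X.fstMultipliers ↦ ((u : (ZMod (q ^ 1))ˣ) : ZMod (q ^ 1)))
      (pow_card_eq_one' (x := (⟨hm.1.unit, hm⟩ : X.fstMultipliers)))
  have hratio : (x' - z' : ZMod (q ^ 1)) / x' = m * ((x - z : ZMod (q ^ 1)) / x) := by
    field_simp
    linear_combination -hmz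
  rw [hratio, mul_pow, hm1, one_mul]

theorem IsNormal.eq_of_sylowRel_of_prime (hX : X.IsNormal) (hL : X.Saturated {x | x.2 = 0})
    {z z' : ZMod (q ^ 1)} (h : Y.SylowRel 1 z 1 z') : z' = z := by
  have hK := hX.saturated_fst_eq_zero
  have h0 : z = 0 ↔ z' = 0 := hK.mem_iff (Y.rel_right h)
  have h1 : z = 1 ↔ z' = 1 := by
    rw [← sub_eq_zero, ← sub_eq_zero (a := z')]
    exact hK.mem_iff (Y.sub_rel h)
  by_contra hne
  have hz0 : z ≠ 0 := fun hz ↦ hne ((h0.1 hz).trans hz.symm)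
  have hz1 : z ≠ 1 := fun hz ↦ hne ((h1.1 hz).trans hz.symm)
  have hmem := one_sub_X_mem (fun f hf g hg hfd hgd ↦ hadamard_mem_ratioInvariants
      (fun _ _ _ _ ↦ exists_perm_units_sylowRel hL) hf hg (by rwa [ZMod.card]) (by rwa [ZMod.card]))
    Nat.card_pos (hX.two_mul_card_fstMultipliers_le (Ne.symm hne) hz0 (mt h0.2 hz0) hz1
      (mt h1.2 hz1)) (one_sub_X_pow_card_mem_ratioInvariants (Y := Y) hK)
  have heval := hmem 1 (Units.mk0 z hz0) 1 (Units.mk0 z' (mt h0.2 hz0)) h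
  exact hne (by simpa using heval.symm)

end PrimeOrder

/-! ### Normal Schur rings over cyclic groups -/

section Map

variable {R R' : Type*} [AddCommGroup R] [AddCommGroup R'] {X : SchurRing R}

/-- Transport of structure along an isomorphism of groups. -/
def map (X : SchurRing R) (e : R ≃+ R') : SchurRing R' where
  toSetoid := X.toSetoid.comap e.symm
  eq_zero {b} h := by
    have h' : X.r (e.symm 0) (e.symm b) := h
    rw [map_zero] at h'
    exact e.symm.map_eq_zero_iff.1 (X.eq_zero h')
  exists_perm {a b} h := by
    obtain ⟨σ, hσ⟩ := X.exists_perm h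
    refine ⟨e.toEquiv.permCongr σ, fun x ↦ ?_⟩
    change X.r _ (e.symm (e _)) ∧ X.r (e.symm (a - x)) (e.symm (b - e _))
    simpa using hσ (e.symm x)

theorem map_rel {e : R ≃+ R'} {x y : R'} :
    (X.map e).r x y ↔ X.r (e.symm x) (e.symm y) := Iff.rfl

theorem map_rel_apply {e : R ≃+ R'} {x y : R} : (X.map e).r (e x) (e y) ↔ X.r x y := by
  simp [map_rel]

theorem IsNormal.map (hX : X.IsNormal) (e : R ≃+ R') : (X.map e).IsNormal := by
  intro f hf hr h0 x y
  have key := hX (fun t ↦ e.symm (f (e t))) (e.symm.bijective.comp (hf.comp e.bijective))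
    (fun x y ↦ by simpa [map_rel] using hr (e x) (e y)) (by simp [h0]) (e.symm x) (e.symm y)
  simpa using congrArg e key

/-- Transport of structure along an isomorphism of groups. -/
def PointExtension.map (Y : X.PointExtension) (e : R ≃+ R') : (X.map e).PointExtension where
  toSetoid := Y.toSetoid.comap (Prod.map e.symm e.symm)
  sub_rel h := by simpa [map_rel] using Y.sub_rel h
  swap h := Y.swap h
  exists_perm {x z x' z'} h := by
    obtain ⟨σ, hσ⟩ := Y.exists_perm h
    refine ⟨e.toEquiv.permCongr σ, fun y ↦ ?_⟩
    change Y.r (e.symm x, e.symm y) (e.symm x', e.symm (e _)) ∧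
      Y.r (e.symm y, e.symm z) (e.symm (e _), e.symm z')
    simpa using hσ (e.symm y)
  eq_zero {x z} h := by
    have h' : Y.r (e.symm 0, e.symm 0) (e.symm x, e.symm z) := h
    rw [map_zero] at h'
    exact (Y.eq_zero h').imp e.symm.map_eq_zero_iff.1 e.symm.map_eq_zero_iff.1

theorem PointExtension.map_rel_apply {Y : X.PointExtension} {e : R ≃+ R'} {x z x' z' : R} :
    (Y.map e).r (e x, e z) (e x', e z') ↔ Y.r (x, z) (x', z') := by
  change Y.r (e.symm (e x), e.symm (e z)) (e.symm (e x'), e.symm (e z')) ↔ _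
  simp only [AddEquiv.symm_apply_apply]

end Map

section SylowDecomposition

theorem addOrderOf_dvd_modulus {n : ℕ} (x : ZMod n) : addOrderOf x ∣ n := by
  simpa using addOrderOf_dvd_natCard x

variable {q a : ℕ} [Fact q.Prime] [NeZero a] {B : Type*} [CommRing B] [Finite B]
  [IsAddCyclic (ZMod (q ^ a) × B)]

theorem not_dvd_addOrderOf_snd (x : ZMod (q ^ a) × B) : ¬ q ∣ addOrderOf x.2 := by
  rintro ⟨m, hm⟩
  have hmx : m • x.2 = 0 := by
    refine (isUnit_natCast_of_isAddCyclic_prod q a B).mul_right_eq_zero.1 ?_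
    rw [← nsmul_eq_mul, smul_smul, ← hm, addOrderOf_nsmul_eq_zero]
  have hpos := addOrderOf_pos x.2
  have hle := Nat.le_of_dvd (Nat.pos_of_mul_pos_left (hm ▸ hpos))
    (addOrderOf_dvd_of_nsmul_eq_zero hmx)
  have := (Fact.out : q.Prime).two_le
  nlinarith

theorem fst_eq_zero_iff_not_dvd_addOrderOf {x : ZMod (q ^ a) × B} :
    x.1 = 0 ↔ ¬ q ∣ addOrderOf x := by
  rw [Prod.addOrderOf, (Fact.out : q.Prime).dvd_lcm, not_or,
    and_iff_left (not_dvd_addOrderOf_snd x)]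
  refine ⟨fun h ↦ ?_, fun h ↦ ?_⟩
  · rw [h, addOrderOf_zero]
    exact (Fact.out : q.Prime).not_dvd_one
  · obtain ⟨k, -, hk⟩ := (Nat.dvd_prime_pow Fact.out).1 (addOrderOf_dvd_modulus x.1)
    obtain rfl : k = 0 := by
      by_contra hk0
      exact h (hk ▸ dvd_pow_self q hk0)
    simpa using hk

theorem snd_eq_zero_iff_forall_prime {x : ZMod (q ^ a) × B} :
    x.2 = 0 ↔ ∀ p : ℕ, p.Prime → p ≠ q → ¬ p ∣ addOrderOf x := by
  simp only [Prod.addOrderOf]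
  refine ⟨fun h p hp hpq hdvd ↦ hpq ?_, fun h ↦ ?_⟩
  · rw [h, addOrderOf_zero, Nat.lcm_one_right] at hdvd
    exact (Nat.prime_dvd_prime_iff_eq hp Fact.out).1
      (hp.dvd_of_dvd_pow (hdvd.trans (addOrderOf_dvd_modulus x.1)))
  · rw [← AddMonoid.addOrderOf_eq_one_iff, Nat.eq_one_iff_not_exists_prime_dvd]
    intro p hp hdvd
    by_cases hpq : p = q
    · exact not_dvd_addOrderOf_snd x (hpq ▸ hdvd)
    · exact h p hp hpq (hdvd.trans (Nat.dvd_lcm_right _ _))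

variable {X : SchurRing (ZMod (q ^ a) × B)} {Y : X.PointExtension}

theorem IsNormal.sylowRel_of_rel (hX : X.IsNormal) (hL : X.Saturated {x | x.2 = 0})
    {x z x' z' : ZMod (q ^ a) × B} (h : Y.r (x, z) (x', z')) :
    Y.SylowRel x.1 z.1 x'.1 z'.1 := by
  have replace_fst : ∀ {x z x' z'}, Y.r (x, z) (x', z') → Y.r ((x.1, 0), z) ((x'.1, 0), z') := by
    intro x z x' z' h
    obtain ⟨⟨t, w⟩, hxy, hyz⟩ := Y.exists_rel h (x.1, 0)
    obtain rfl : w = 0 := hL (Y.rel_right hxy) rfl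
    obtain rfl : t = x'.1 := sub_eq_zero.1
      (hX.saturated_fst_eq_zero (Y.sub_rel hxy) (sub_self x.1))
    exact hyz
  exact Y.swap (replace_fst (Y.swap (replace_fst h)))

theorem IsNormal.two_mul_sub_fst_eq_zero (hX : X.IsNormal) (hL : X.Saturated {x | x.2 = 0})
    {z z' : ZMod (q ^ a) × B} (h : Y.r (1, z) (1, z')) : (2 * (z' - z)).1 = 0 := by
  have hs : Y.SylowRel 1 z.1 1 z'.1 := hX.sylowRel_of_rel hL h
  have of_eq (h : z'.1 = z.1) : (2 * (z' - z)).1 = 0 := by simp [h]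
  obtain rfl | ha : a = 1 ∨ 2 ≤ a := by have := NeZero.ne a; omega
  · exact of_eq (hX.eq_of_sylowRel_of_prime hL hs)
  · by_cases hq2 : q = 2
    · subst hq2
      exact hX.two_mul_sub_eq_zero_of_sylowRel hL ha hs
    · exact of_eq (hX.eq_of_sylowRel_of_odd hL hq2 ha hs)

end SylowDecomposition

section ZMod

theorem exists_ringEquiv_prod {n q : ℕ} [NeZero n] (hq : q.Prime) (hqn : q ∣ n) :
    ∃ a m : ℕ, a ≠ 0 ∧ m ≠ 0 ∧ Nonempty (ZMod n ≃+* ZMod (q ^ a) × ZMod m) := by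
  have hn : n ≠ 0 := NeZero.ne n
  refine ⟨n.factorization q, n / q ^ n.factorization q, (hq.factorization_pos_of_dvd hn hqn).ne',
    (Nat.ordCompl_pos q hn).ne', ⟨?_⟩⟩
  exact (ZMod.ringEquivCongr (Nat.ordProj_mul_ordCompl_eq_self n q).symm).trans
    (ZMod.chineseRemainder ((Nat.coprime_ordCompl hq hn).pow_left _))

variable {n : ℕ} [NeZero n] {X : SchurRing (ZMod n)} {Y : X.PointExtension}

theorem IsNormal.saturated_not_dvd_addOrderOf (hX : X.IsNormal) {q : ℕ} (hq : q.Prime) :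
    X.Saturated {x | ¬ q ∣ addOrderOf x} := by
  intro x y h hx
  by_cases hqn : q ∣ n
  · obtain ⟨a, m, ha, hm, ⟨e⟩⟩ := exists_ringEquiv_prod hq hqn
    have := Fact.mk hq
    have := NeZero.mk ha
    have := NeZero.mk hm
    have := isAddCyclic_of_surjective e e.surjective
    have addOrderOf_apply (x : ZMod n) : addOrderOf (e x) = addOrderOf x :=
      AddEquiv.addOrderOf_eq e.toAddEquiv x
    have hK := (hX.map e.toAddEquiv).saturated_fst_eq_zero (map_rel_apply.2 h)
    simpa [fst_eq_zero_iff_not_dvd_addOrderOf, addOrderOf_apply] using hK (by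
      simpa [fst_eq_zero_iff_not_dvd_addOrderOf, addOrderOf_apply] using hx)
  · exact fun hy ↦ hqn (hy.trans (addOrderOf_dvd_modulus y))

theorem IsNormal.not_dvd_addOrderOf_two_mul_sub (hX : X.IsNormal) {q : ℕ} (hq : q.Prime)
    {z z' : ZMod n} (h : Y.r (1, z) (1, z')) : ¬ q ∣ addOrderOf (2 * (z' - z)) := by
  by_cases hqn : q ∣ n
  · obtain ⟨a, m, ha, hm, ⟨e⟩⟩ := exists_ringEquiv_prod hq hqn
    have := Fact.mk hq
    have := NeZero.mk ha
    have := NeZero.mk hm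
    have := isAddCyclic_of_surjective e e.surjective
    have addOrderOf_symm_apply (x) : addOrderOf (e.symm x) = addOrderOf x :=
      AddEquiv.addOrderOf_eq e.symm.toAddEquiv x
    have hL : (X.map e.toAddEquiv).Saturated {x | x.2 = 0} := by
      intro x y hxy hx
      refine snd_eq_zero_iff_forall_prime.2 fun p hp hpq ↦ ?_
      rw [← addOrderOf_symm_apply]
      refine hX.saturated_not_dvd_addOrderOf hp (map_rel.1 hxy) ?_
      simpa [addOrderOf_symm_apply] using snd_eq_zero_iff_forall_prime.1 hx p hp hpq
    have key := (hX.map e.toAddEquiv).two_mul_sub_fst_eq_zero (Y := Y.map e.toAddEquiv)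
      (z := e z) (z' := e z') hL
      (by rw [← map_one e]; exact PointExtension.map_rel_apply.2 h)
    have he2 : 2 * (e z' - e z) = e (2 * (z' - z)) := by
      rw [map_mul, map_sub, map_ofNat]
    rwa [fst_eq_zero_iff_not_dvd_addOrderOf, he2, ← addOrderOf_symm_apply,
      RingEquiv.symm_apply_apply] at key
  · exact fun hy ↦ hqn (hy.trans (addOrderOf_dvd_modulus _))

theorem IsNormal.two_mul_sub_eq_zero (hX : X.IsNormal) {z z' : ZMod n}
    (h : Y.r (1, z) (1, z')) : 2 * (z' - z) = 0 := by
  rw [← AddMonoid.addOrderOf_eq_one_iff, Nat.eq_one_iff_not_exists_prime_dvd]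
  exact fun q hq ↦ hX.not_dvd_addOrderOf_two_mul_sub hq h

end ZMod

section Involution

variable {R : Type*} [CommRing R] {X : SchurRing R} {Y : X.PointExtension} {e : R}

theorem IsNormal.apply_eq_self [Finite R] [IsAddCyclic R] (hX : X.IsNormal) {f : R → R}
    (hf : Function.Bijective f) (hr : ∀ x y, X.r (y - x) (f y - f x)) (h0 : f 0 = 0) (h1 : f 1 = 1)
    (x : R) : f x = x := by
  let F : R →+ R := AddMonoidHom.mk' f (hX f hf hr h0)
  obtain ⟨k, rfl⟩ := natCast_surjective_of_isAddCyclic x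
  calc f k = F (k • (1 : R)) := by rw [nsmul_one]; rfl
    _ = k • (1 : R) := by rw [map_nsmul]; exact congrArg (k • ·) h1
    _ = k := nsmul_one k

theorem rel_add_sub_of_not_rel
    (hY : ∀ w w', Y.r (1, w) (1, w') → w' = w ∨ w' = w + e) {x y : R}
    (hx : Y.r (1, x) (1, x + e)) (hy : ¬ Y.r (1, y) (1, y + e)) : X.r (x - y) (x + e - y) := by
  obtain ⟨y', hyy', hyx⟩ := Y.exists_rel hx y
  obtain rfl : y' = y := (hY _ _ hyy').resolve_right fun h ↦ hy (h ▸ hyy')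
  exact Y.sub_rel hyx

/-- If the classes `{z : (1, z) ∼ (1, w)}` are single points or pairs `{w, w + e}`, then swapping
the points of every pair is an automorphism of the scheme that fixes `0` and `1`. -/
theorem IsNormal.not_rel_add [Finite R] [IsAddCyclic R] (hX : X.IsNormal) (he : e ≠ 0)
    (hee : 2 * e = 0) (hY : ∀ w w', Y.r (1, w) (1, w') → w' = w ∨ w' = w + e) (z : R) :
    ¬ Y.r (1, z) (1, z + e) := by
  classical
  intro hz
  have add_add (w : R) : w + e + e = w := by linear_combination hee
  let f (w : R) : R := if Y.r (1, w) (1, w + e) then w + e else w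
  have apply_of_rel {w : R} (hw : Y.r (1, w) (1, w + e)) : f w = w + e := if_pos hw
  have apply_of_not {w : R} (hw : ¬ Y.r (1, w) (1, w + e)) : f w = w := if_neg hw
  have involutive : Function.Involutive f := by
    intro w
    by_cases hw : Y.r (1, w) (1, w + e)
    · have hw' : Y.r (1, w + e) (1, w + e + e) := by
        rw [add_add]
        exact Y.symm' hw
      rw [apply_of_rel hw, apply_of_rel hw', add_add]
    · rw [apply_of_not hw, apply_of_not hw]
  have rel (x y : R) : X.r (y - x) (f y - f x) := by
    by_cases hx : Y.r (1, x) (1, x + e) <;> by_cases hy : Y.r (1, y) (1, y + e)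
    · rw [apply_of_rel hx, apply_of_rel hy, add_sub_add_right_eq_sub]
    · rw [apply_of_rel hx, apply_of_not hy]
      simpa using neg_rel (rel_add_sub_of_not_rel hY hx hy)
    · rw [apply_of_not hx, apply_of_rel hy]
      exact rel_add_sub_of_not_rel hY hy hx
    · rw [apply_of_not hx, apply_of_not hy]
  have apply_zero : f 0 = 0 := apply_of_not fun h ↦ he (by simpa using X.eq_zero (Y.rel_right h))
  have apply_one : f 1 = 1 := apply_of_not fun h ↦ he (X.eq_zero (by simpa using Y.sub_rel h))
  have hid := hX.apply_eq_self involutive.bijective rel apply_zero apply_one z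
  exact he (by simpa [apply_of_rel hz] using hid)

theorem eq_zero_or_eq_of_two_mul_eq_zero [Finite R] [IsAddCyclic R] {d : R} (he : e ≠ 0)
    (hee : 2 * e = 0) (hd : 2 * d = 0) : d = 0 ∨ d = e := by
  classical
  have := Fintype.ofFinite R
  have hcard := IsAddCyclic.card_nsmul_eq_zero_le (α := R) (n := 2) two_pos
  by_contra! hne
  have hsub : ({0, e, d} : Finset R) ⊆ Finset.univ.filter fun x ↦ 2 • x = 0 := by
    intro x hx
    simp only [Finset.mem_insert, Finset.mem_singleton] at hx
    rcases hx with rfl | rfl | rfl <;> simp_all [two_mul]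
  have := (Finset.card_le_card hsub).trans hcard
  rw [Finset.card_eq_three.2 ⟨0, e, d, he.symm, hne.1.symm, hne.2.symm, rfl⟩] at this
  omega

end Involution

theorem IsNormal.eq_of_rel_one {n : ℕ} [NeZero n] {X : SchurRing (ZMod n)} (hX : X.IsNormal)
    {Y : X.PointExtension} {z z' : ZMod n} (h : Y.r (1, z) (1, z')) : z' = z := by
  by_contra hne
  have he : z' - z ≠ 0 := sub_ne_zero.2 hne
  refine hX.not_rel_add he (hX.two_mul_sub_eq_zero h) (fun w w' hw ↦ ?_) z
    ((add_sub_cancel z z').symm ▸ h)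
  rcases eq_zero_or_eq_of_two_mul_eq_zero he (hX.two_mul_sub_eq_zero h)
    (hX.two_mul_sub_eq_zero hw) with hd | hd
  · exact Or.inl (sub_eq_zero.1 hd)
  · exact Or.inr (by rw [← hd, add_sub_cancel])

end SchurRing

/-! ### Coherent configurations -/

namespace CohCfg

variable {Ω Ω' : Type u} {X Y : CohCfg Ω} {X' Y' : CohCfg Ω'} {p p' : Ω × Ω} {x y z : Ω}
  {s : Set (Ω × Ω)}

/-- The basis relation that contains a given pair of points. -/
noncomputable def basisRel (X : CohCfg Ω) (p : Ω × Ω) : Set (Ω × Ω) := (X.cover p).choose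

theorem basisRel_mem (X : CohCfg Ω) (p : Ω × Ω) : X.basisRel p ∈ X.S :=
  (X.cover p).choose_spec.1

theorem mem_basisRel (X : CohCfg Ω) (p : Ω × Ω) : p ∈ X.basisRel p :=
  (X.cover p).choose_spec.2

theorem eq_of_mem_of_mem {t : Set (Ω × Ω)} (hs : s ∈ X.S) (ht : t ∈ X.S) (hps : p ∈ s)
    (hpt : p ∈ t) : s = t := by
  by_contra hne
  exact eq_empty_iff_forall_notMem.1 (X.disj s hs t ht hne) p ⟨hps, hpt⟩

theorem basisRel_eq_iff_mem (hs : s ∈ X.S) : X.basisRel p = s ↔ p ∈ s :=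
  ⟨fun h ↦ h ▸ X.mem_basisRel p, eq_of_mem_of_mem (X.basisRel_mem p) hs (X.mem_basisRel p)⟩

theorem basisRel_eq_basisRel_iff : X.basisRel p = X.basisRel p' ↔ p ∈ X.basisRel p' :=
  basisRel_eq_iff_mem (X.basisRel_mem p')

theorem eq_of_basisRel_self_eq (h : X.basisRel (x, x) = X.basisRel (y, z)) : y = z :=
  X.diag _ (X.basisRel_mem (x, x)) ⟨_, X.mem_basisRel _, rfl⟩ _ (basisRel_eq_basisRel_iff.1 h.symm)

theorem basisRel_swap (X : CohCfg Ω) (p : Ω × Ω) :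
    X.basisRel p.swap = {p' | p'.swap ∈ X.basisRel p} :=
  (basisRel_eq_iff_mem (X.conv _ (X.basisRel_mem p))).2 (X.mem_basisRel p)

theorem le.basisRel_eq (hXY : le X Y) (h : Y.basisRel p = Y.basisRel p') :
    X.basisRel p = X.basisRel p' :=
  basisRel_eq_basisRel_iff.2
    (hXY _ (X.basisRel_mem p') _ (Y.basisRel_mem p') ⟨p', Y.mem_basisRel _, X.mem_basisRel _⟩
      (basisRel_eq_basisRel_iff.1 h))

theorem exists_perm_of_basisRel_eq (h : X.basisRel p = X.basisRel p') :
    ∃ σ : Equiv.Perm Ω, ∀ γ, X.basisRel (p.1, γ) = X.basisRel (p'.1, σ γ) ∧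
      X.basisRel (γ, p.2) = X.basisRel (σ γ, p'.2) := by
  have := X.finite
  let type (p : Ω × Ω) (γ : Ω) : X.S × X.S :=
    (⟨_, X.basisRel_mem (p.1, γ)⟩, ⟨_, X.basisRel_mem (γ, p.2)⟩)
  have type_fiber (p : Ω × Ω) (c : X.S × X.S) :
      {γ | type p γ = c} = {γ | (p.1, γ) ∈ c.1.1 ∧ (γ, p.2) ∈ c.2.1} := by
    ext γ
    simp only [type, mem_ofPred_eq, Prod.ext_iff, Subtype.ext_iff, basisRel_eq_iff_mem c.1.2,
      basisRel_eq_iff_mem c.2.2]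
  have fiberEquiv (c : X.S × X.S) : Nonempty ({γ // type p γ = c} ≃ {γ // type p' γ = c}) := by
    refine Finite.card_eq.1 ?_
    change Nat.card {γ | type p γ = c} = Nat.card {γ | type p' γ = c}
    rw [Nat.card_coe_set_eq, Nat.card_coe_set_eq, type_fiber, type_fiber]
    exact X.inum _ c.1.2 _ c.2.2 _ (X.basisRel_mem p') p (basisRel_eq_basisRel_iff.1 h) p'
      (X.mem_basisRel p')
  refine ⟨Equiv.ofFiberEquiv fun c ↦ (fiberEquiv c).some, fun γ ↦ ?_⟩
  have hγ := Equiv.ofFiberEquiv_map (fun c ↦ (fiberEquiv c).some) γ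
  exact ⟨congrArg (fun c ↦ c.1.1) hγ.symm, congrArg (fun c ↦ c.2.1) hγ.symm⟩

theorem mem_relImage_symm {e : Ω' ≃ Ω} {p : Ω' × Ω'} :
    p ∈ relImage e.symm s ↔ (e p.1, e p.2) ∈ s := by
  simp [relImage, Prod.ext_iff, Equiv.symm_apply_eq]

theorem relImage_eq_self {f : Ω → Ω} (hf : Function.Bijective f)
    (h : ∀ x y, X.basisRel (f x, f y) = X.basisRel (x, y)) {s} (hs : s ∈ X.S) :
    relImage f s = s := by
  ext p
  refine (mem_relImage_symm (e := (Equiv.ofBijective f hf).symm)).trans ?_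
  rw [← basisRel_eq_iff_mem hs, ← basisRel_eq_iff_mem hs, ← h]
  simp only [Equiv.ofBijective_apply_symm_apply]

section AlgIso

variable {φ : Set (Ω × Ω) → Set (Ω' × Ω')} {x' y' z' : Ω'}

theorem IsAlgIso.mem_iff (h : IsAlgIso X X' φ) (hs : s ∈ X.S) {p' : Ω' × Ω'}
    (hp : p' ∈ φ (X.basisRel p)) : p' ∈ φ s ↔ p ∈ s := by
  have hb := X.basisRel_mem p
  rw [← basisRel_eq_iff_mem hs, ← h.bijOn.injOn.eq_iff hb hs]
  exact ⟨eq_of_mem_of_mem (h.bijOn.mapsTo hb) (h.bijOn.mapsTo hs) hp, fun he ↦ he ▸ hp⟩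

theorem cnum_pos_iff [Finite Ω] {r : Set (Ω × Ω)} :
    0 < cnum r s p ↔ ∃ γ, (p.1, γ) ∈ r ∧ (γ, p.2) ∈ s :=
  ncard_pos

theorem IsAlgIso.exists_triangle (h : IsAlgIso X X' φ) (hxz : (x', z') ∈ φ (X.basisRel (x, z)))
    (y : Ω) : ∃ y', (x', y') ∈ φ (X.basisRel (x, y)) ∧ (y', z') ∈ φ (X.basisRel (y, z)) := by
  have := X.finite
  have := X'.finite
  rw [← cnum_pos_iff (p := (x', z')), ← h.cnum_eq _ (X.basisRel_mem _) _ (X.basisRel_mem _) _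
    (X.basisRel_mem _) _ (X.mem_basisRel _) _ hxz, cnum_pos_iff]
  exact ⟨y, X.mem_basisRel _, X.mem_basisRel _⟩

theorem IsAlgIso.exists_triangle_symm (h : IsAlgIso X X' φ)
    (hxz : (x', z') ∈ φ (X.basisRel (x, z))) (y' : Ω') :
    ∃ y, (x', y') ∈ φ (X.basisRel (x, y)) ∧ (y', z') ∈ φ (X.basisRel (y, z)) := by
  have := X.finite
  have := X'.finite
  obtain ⟨r, hr, hrφ⟩ := h.bijOn.surjOn (X'.basisRel_mem (x', y'))
  obtain ⟨s, hs, hsφ⟩ := h.bijOn.surjOn (X'.basisRel_mem (y', z'))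
  obtain ⟨y, hxy, hyz⟩ : ∃ y, (x, y) ∈ r ∧ (y, z) ∈ s := by
    rw [← cnum_pos_iff (p := (x, z)), h.cnum_eq r hr s hs _ (X.basisRel_mem _) _
      (X.mem_basisRel _) _ hxz, cnum_pos_iff, hrφ, hsφ]
    exact ⟨y', X'.mem_basisRel _, X'.mem_basisRel _⟩
  refine ⟨y, ?_, ?_⟩
  · rw [(basisRel_eq_iff_mem hr).2 hxy, hrφ]
    exact X'.mem_basisRel _
  · rw [(basisRel_eq_iff_mem hs).2 hyz, hsφ]
    exact X'.mem_basisRel _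

theorem IsAlgIso.exists_diag_mem (h : IsAlgIso X X' φ) (x : Ω) :
    ∃ x', (x', x') ∈ φ (X.basisRel (x, x)) := by
  have hx := X.basisRel_mem (x, x)
  obtain ⟨⟨x', z'⟩, hxz⟩ := X'.nonemp _ (h.bijOn.mapsTo hx)
  obtain ⟨y, hxy, hyz⟩ := h.exists_triangle_symm hxz x'
  obtain rfl : y = x :=
    eq_of_basisRel_self_eq (basisRel_eq_basisRel_iff.2 ((h.mem_iff hx hyz).1 hxz)).symm
  exact ⟨x', hxy⟩

/-- A point whose outgoing basis relations are functional serves as an origin that names every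
other point, and the algebraic isomorphism transports these names. -/
theorem PartlyRegular.separable (hX : X.PartlyRegular) : X.Separable := by
  have := X.finite
  obtain ⟨α, hα⟩ := hX
  have eq_of_basisRel_eq {x y : Ω} (h : X.basisRel (α, x) = X.basisRel (α, y)) : x = y :=
    (ncard_le_one (toFinite _)).1 (hα _ (X.basisRel_mem (α, y))) x
      (basisRel_eq_basisRel_iff.1 h) y (X.mem_basisRel _)
  intro Ω' X' φ h
  obtain ⟨α', hα'⟩ := h.exists_diag_mem α
  choose g hg using fun x' ↦ (h.exists_triangle_symm hα' x').imp fun _ ↦ And.left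
  have g_unique {x : Ω} {x' : Ω'} (hx : (α', x') ∈ φ (X.basisRel (α, x))) : x = g x' :=
    eq_of_basisRel_eq (basisRel_eq_basisRel_iff.2
      ((h.mem_iff (X.basisRel_mem _) hx).1 (hg x')))
  have g_pair (x' y' : Ω') : (x', y') ∈ φ (X.basisRel (g x', g y')) := by
    obtain ⟨x, hαx, hxy⟩ := h.exists_triangle_symm (hg y') x'
    exact g_unique hαx ▸ hxy
  have g_injective : Function.Injective g := by
    intro x' y' hxy
    have hd := h.bijOn.mapsTo (X.basisRel_mem (g x', g x'))
    exact X'.diag _ hd ⟨_, g_pair x' x', rfl⟩ (x', y') (by simpa only [← hxy] using g_pair x' y')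
  have g_surjective : Function.Surjective g := by
    intro x
    obtain ⟨x', hx', -⟩ := h.exists_triangle hα' x
    exact ⟨x', (g_unique hx').symm⟩
  let e := Equiv.ofBijective g ⟨g_injective, g_surjective⟩
  refine ⟨e.symm, e.symm.bijective, fun s hs ↦ ?_⟩
  ext ⟨x', y'⟩
  rw [h.mem_iff hs (g_pair x' y'), mem_relImage_symm]
  rfl

theorem InducedBy.of_le {f : Ω → Ω'} {ψ : Set (Ω × Ω) → Set (Ω' × Ω')} (hXY : le X Y)
    (h : InducedBy Y Y' ψ f) (hψ : ∀ s ∈ X.S, algImage Y ψ s = φ s) : InducedBy X X' φ f := by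
  refine ⟨h.1, fun s hs ↦ (hψ s hs).symm.trans (subset_antisymm ?_ ?_)⟩
  · rintro p' ⟨_, ⟨t, ⟨ht, hts⟩, rfl⟩, hp'⟩
    rw [h.2 t ht] at hp'
    exact image_mono hts hp'
  · rintro _ ⟨p, hps, rfl⟩
    have hsub := hXY s hs _ (Y.basisRel_mem p) ⟨p, Y.mem_basisRel p, hps⟩
    refine ⟨_, ⟨Y.basisRel p, ⟨Y.basisRel_mem p, hsub⟩, rfl⟩, ?_⟩
    rw [h.2 _ (Y.basisRel_mem p)]
    exact mem_image_of_mem _ (Y.mem_basisRel p)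

end AlgIso

section Circulant

variable {G : Type u} [CommGroup G] {X Y : CohCfg G}

theorem IsCirculant.basisRel_eq (hc : X.IsCirculant) (x y : G) :
    X.basisRel (x, y) = X.basisRel (1, y / x) := by
  refine basisRel_eq_basisRel_iff.2 ?_
  rw [← hc x _ (X.basisRel_mem (1, y / x))]
  exact ⟨(1, y / x), X.mem_basisRel _, by simp⟩

/-- The Schur ring of a circulant scheme, in additive notation: the basic sets are the sets of
out-neighbours of the identity. -/
def IsCirculant.schurRing (hc : X.IsCirculant) : SchurRing (Additive G) where
  r x y := X.basisRel (1, x.toMul) = X.basisRel (1, y.toMul)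
  iseqv := ⟨fun _ ↦ rfl, Eq.symm, Eq.trans⟩
  eq_zero h := (eq_of_basisRel_self_eq h).symm
  exists_perm {a b} h := by
    obtain ⟨σ, hσ⟩ := exists_perm_of_basisRel_eq h
    refine ⟨Additive.toMul.permCongr.symm σ, fun x ↦ ?_⟩
    simpa [hc.basisRel_eq _ a.toMul, hc.basisRel_eq _ b.toMul] using hσ x.toMul

theorem IsNormalCirc.isNormal_schurRing (hn : X.IsNormalCirc) (hc : X.IsCirculant) :
    hc.schurRing.IsNormal := by
  intro f hf hr h0
  refine hn f hf (fun _ ↦ relImage_eq_self hf fun x y ↦ ?_) h0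
  calc X.basisRel (f x, f y) = X.basisRel (1, (f y - f x).toMul) := hc.basisRel_eq _ _
    _ = X.basisRel (1, (y - x).toMul) := (hr x y).symm
    _ = X.basisRel (x, y) := (hc.basisRel_eq _ _).symm

/-- The point extension of the Schur ring of a circulant scheme that comes from a coherent
configuration in which the identity is a fiber. -/
def IsCirculant.pointExtension (hc : X.IsCirculant) (hXY : le X Y)
    (h1 : {((1 : G), (1 : G))} ∈ Y.S) : hc.schurRing.PointExtension where
  r p p' := Y.basisRel (p.1.toMul, p.2.toMul) = Y.basisRel (p'.1.toMul, p'.2.toMul)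
  iseqv := ⟨fun _ ↦ rfl, Eq.symm, Eq.trans⟩
  sub_rel {x z x' z'} h := by
    have hX := hXY.basisRel_eq h
    rwa [hc.basisRel_eq, hc.basisRel_eq x'.toMul] at hX
  swap {x z x' z'} h := by
    have hswap := Y.basisRel_swap (x.toMul, z.toMul)
    rwa [h, ← basisRel_swap] at hswap
  exists_perm h := by
    obtain ⟨σ, hσ⟩ := exists_perm_of_basisRel_eq h
    exact ⟨Additive.toMul.permCongr.symm σ, fun y ↦ hσ y.toMul⟩
  eq_zero h := by
    have h11 : Y.basisRel (1, 1) = {(1, 1)} := (basisRel_eq_iff_mem h1).2 rfl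
    exact Prod.mk.inj ((basisRel_eq_iff_mem h1).1 (h.symm.trans h11))

theorem IsNormalCirc.partlyRegular [IsCyclic G] [Finite G] (hn : X.IsNormalCirc)
    (hc : X.IsCirculant) (hXY : le X Y) (h1 : {((1 : G), (1 : G))} ∈ Y.S) : Y.PartlyRegular := by
  let e : Additive G ≃+ ZMod (Nat.card (Additive G)) := (zmodAddCyclicAddEquiv inferInstance).symm
  have : NeZero (Nat.card (Additive G)) := ⟨Nat.card_pos.ne'⟩
  refine ⟨(e.symm 1).toMul, fun s hs ↦ (ncard_le_one (toFinite _)).2 fun z hz z' hz' ↦ ?_⟩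
  have hrel : (hc.pointExtension hXY h1).r (e.symm 1, Additive.ofMul z)
      (e.symm 1, Additive.ofMul z') :=
    ((basisRel_eq_iff_mem hs).2 hz).trans ((basisRel_eq_iff_mem hs).2 hz').symm
  have hmap := SchurRing.PointExtension.map_rel_apply (e := e).2 hrel
  rw [e.apply_symm_apply] at hmap
  exact (e.injective (((hn.isNormal_schurRing hc).map e).eq_of_rel_one hmap)).symm

end Circulant

end CohCfg

open CohCfg in
/-- Corollary: every normal circulant scheme is sesquiseparable. -/
theorem stmt_14 {G : Type u} [CommGroup G] [IsCyclic G] [Finite G]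
    (X : CohCfg G) (hs : IsScheme X) (hc : IsCirculant X) (hn : IsNormalCirc X) :
    Sesquiseparable X := by
  rintro Ω' X' φ ⟨hφ, hext⟩
  obtain ⟨α', hα'⟩ := hφ.exists_diag_mem 1
  have hdiag : diagRel univ = X.basisRel (1, 1) := by
    rw [(basisRel_eq_iff_mem hs).2 rfl]
    simp [diagRel]
  have hfiber : IsFiber X univ := by
    rw [IsFiber, hdiag]
    exact X.basisRel_mem (1, 1)
  obtain ⟨Y, Y', ψ, ⟨hXY, h1, -⟩, -, hψ, hψφ, -⟩ :=
    hext univ hfiber 1 (mem_univ 1) α' (by rwa [fiberImage, hdiag])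
  obtain ⟨f, hf⟩ := (hn.partlyRegular hc hXY h1).separable Ω' Y' ψ hψ
  exact ⟨f, hf.of_le hXY hψφ⟩
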